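/- arXiv:1108.0136 — 3 statements merged into one kernel-verified Lean document; each statement's English description precedes it below -/
import Mathlib

section
/- Let W ∈ C²(ℝ^d) have compact support, and let (μ_n) be finite Borel measures on ℝ^{2d} with sup_n μ_n(ℝ^{2d}) < ∞ converging distributionally to a finite Borel measure μ (i.e. ∫φ dμ_n → ∫φ dμ for all φ ∈ C_c^∞(ℝ^{2d})). Assume the tightness-in-p condition: for every q̄ ∈ ℝ^d, lim_{r→∞} sup_n ∫_{{(p,q) : |p| > r}} |∇W(q̄ − q)| dμ_n(p,q) = 0. Then ∇W⋆μ_n converges to ∇W⋆μ uniformly on every compact subset of ℝ^d, where (∇W⋆ν)(q̄) = ∫ ∇W(q̄ − q) dν(p,q). Consequently, if Φ ∈ C²(ℝ^d) and V_ν(p,q) = (−∇Φ(q) − (∇W⋆ν)(q), p), then V_{μ_n} → V_μ uniformly on compact subsets of ℝ^{2d}, and for every vector field Ξ ∈ C_c^∞(ℝ^{2d}; ℝ^{2d}) and every φ ∈ C_c^∞(ℝ^{2d}): ∫ ⟨Ξ, V_{μ_n}⟩ dμ_n → ∫ ⟨Ξ, V_μ⟩ dμ and ∫ φ |V_{μ_n}|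 dμ_n → ∫ φ |V_μ| dμ. -/
/-! The convolutions `∇W ⋆ μₙ` have a common modulus of continuity, since `∇W` is uniformly
continuous and the masses of the `μₙ` are bounded; so on compact sets it suffices to prove pointwise
convergence (`tendstoUniformlyOn_of_equicontinuous`).

For fixed `q̄` the function `(p, q) ↦ ∇W (q̄ - q)` is compactly supported in `q` but constant in `p`.
Multiplied by a cutoff in `p` it becomes compactly supported, and distributional convergence with
bounded masses applies to it (`tendsto_integral_of_compactSupport`). Tightness bounds the error made
by the cutoff uniformly in `n`, and for the limit `μ` the error vanishes because `μ` is finite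
(`tendsto_conv_pointwise`).

The integrals against `Ξ` and `φ` have the form `∫ H(x, (∇W ⋆ μₙ)(q)) dμₙ(x)`, with `H` compactly
supported in `x` and Lipschitz in the last variable. Their integrands converge uniformly, and the
uniform error is multiplied only by the bounded masses (`tendsto_integral_comp`). -/

open MeasureTheory Set Filter Topology
open scoped ENNReal RealInnerProductSpace

noncomputable section

/-- `d`-dimensional Euclidean space. -/
abbrev Euc (d : ℕ) := EuclideanSpace ℝ (Fin d)

/-- The convolution `(∇W ⋆ ν)(qbar) = ∫ ∇W(qbar − q) dν(p,q)` of the gradient of `W` with a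
measure on phase space. -/
def gradWconv {d : ℕ} (W : Euc d → ℝ) (ν : Measure (Euc d × Euc d)) (qbar : Euc d) : Euc d :=
  ∫ x, gradient W (qbar - x.2) ∂ν

/-- The symplectic velocity field `V_ν(p,q) = (−∇Φ(q) − (∇W⋆ν)(q), p)`. -/
def Vfield {d : ℕ} (Φ W : Euc d → ℝ) (ν : Measure (Euc d × Euc d))
    (x : Euc d × Euc d) : Euc d × Euc d :=
  (-gradient Φ x.2 - gradWconv W ν x.2, x.1)

/-! ### Gradients of `C²` functions -/

theorem gradient_continuous {d : ℕ} {W : Euc d → ℝ} (hW : ContDiff ℝ 2 W) :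
    Continuous (gradient W) := by
  unfold gradient
  exact (LinearIsometryEquiv.continuous _).comp (hW.continuous_fderiv (by norm_num))

theorem gradient_hasCompactSupport {d : ℕ} {W : Euc d → ℝ} (hWc : HasCompactSupport W) :
    HasCompactSupport (gradient W) := by
  unfold gradient
  exact (hWc.fderiv (𝕜 := ℝ)).comp_left (map_zero _)

/-! ### Weak convergence and uniform errors -/

theorem norm_integral_sub_le {X E : Type*} [MeasurableSpace X] [NormedAddCommGroup E] [NormedSpace ℝ E]
    {ν : Measure X} [IsFiniteMeasure ν] {f g : X → E} (hf : Integrable f ν) (hg : Integrable g ν)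
    {c ε : ℝ} (hε : 0 ≤ ε) (hc : ν.real univ ≤ c) (hfg : ∀ x, ‖f x - g x‖ ≤ ε) :
    ‖(∫ x, f x ∂ν) - ∫ x, g x ∂ν‖ ≤ ε * c := by
  rw [← integral_sub hf hg]
  exact (norm_integral_le_of_norm_le_const (Eventually.of_forall hfg)).trans
    (mul_le_mul_of_nonneg_left hc hε)

/-- If the masses are bounded by `c`, testing against compactly supported functions is stable under
uniform convergence of the test functions. -/
theorem tendsto_integral_of_uniform {X E : Type*} [MeasurableSpace X] [NormedAddCommGroup E] [NormedSpace ℝ E]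
    {ν : ℕ → Measure X} [∀ n, IsFiniteMeasure (ν n)] {c : ℝ} (hc : ∀ n, (ν n).real univ ≤ c)
    {f : ℕ → X → E} {g : X → E} {L : E}
    (hf : ∀ n, Integrable (f n) (ν n)) (hg : ∀ n, Integrable g (ν n))
    (hfg : ∀ ε > 0, ∀ᶠ n in atTop, ∀ x, ‖f n x - g x‖ ≤ ε)
    (hL : Tendsto (fun n => ∫ x, g x ∂(ν n)) atTop (𝓝 L)) :
    Tendsto (fun n => ∫ x, f n x ∂(ν n)) atTop (𝓝 L) := by
  have hc0 : 0 ≤ c := measureReal_nonneg.trans (hc 0)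
  have h0 : Tendsto (fun n => (∫ x, f n x ∂(ν n)) - ∫ x, g x ∂(ν n)) atTop (𝓝 0) := by
    rw [Metric.tendsto_nhds]
    intro ε hε
    filter_upwards [hfg (ε / (c + 1)) (by positivity)] with n hn
    rw [dist_zero_right]
    refine (norm_integral_sub_le (hf n) (hg n) (by positivity) (hc n) hn).trans_lt ?_
    rw [div_mul_eq_mul_div, div_lt_iff₀ (by positivity)]
    nlinarith
  simpa using h0.add hL

/-- Distributional convergence and bounded masses give convergence against all compactly supported
continuous functions, since these are uniform limits of test functions with no larger support. -/
theorem tendsto_integral_of_compactSupport {X : Type*} [NormedAddCommGroup X] [NormedSpace ℝ X]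
    [FiniteDimensional ℝ X] [MeasurableSpace X] [BorelSpace X]
    {ν : ℕ → Measure X} [∀ n, IsFiniteMeasure (ν n)]
    {ν₀ : Measure X} [IsFiniteMeasure ν₀] {c : ℝ} (hc : ∀ n, (ν n).real univ ≤ c)
    (hconv : ∀ φ : X → ℝ, ContDiff ℝ (⊤ : ℕ∞) φ → HasCompactSupport φ →
      Tendsto (fun n => ∫ x, φ x ∂(ν n)) atTop (𝓝 (∫ x, φ x ∂ν₀)))
    {f : X → ℝ} (hf : Continuous f) (hfs : HasCompactSupport f) :
    Tendsto (fun n => ∫ x, f x ∂(ν n)) atTop (𝓝 (∫ x, f x ∂ν₀)) := by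
  set c' := max c (ν₀.real univ) with hc'
  have hc0 : 0 ≤ c' := measureReal_nonneg.trans (le_max_right _ _)
  rw [Metric.tendsto_nhds]
  intro ε hε
  have hδ : 0 < ε / (3 * (c' + 1)) := by positivity
  obtain ⟨g, hg, hgf, hgs⟩ := hf.exists_contDiff_approx ⊤ continuous_const (fun _ => hδ)
  have hgc : HasCompactSupport g := hfs.mono hgs
  have hb : ε / (3 * (c' + 1)) * c' < ε / 3 := by
    rw [div_mul_eq_mul_div, div_lt_div_iff₀ (by positivity) (by norm_num)]
    nlinarith
  have hclose : ∀ (κ : Measure X) [IsFiniteMeasure κ], κ.real univ ≤ c' →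
      ‖(∫ x, g x ∂κ) - ∫ x, f x ∂κ‖ < ε / 3 := fun κ _ hκ =>
    (norm_integral_sub_le (hg.continuous.integrable_of_hasCompactSupport hgc)
      (hf.integrable_of_hasCompactSupport hfs) hδ.le hκ
      fun x => by rw [← dist_eq_norm]; exact (hgf x).le).trans_lt hb
  filter_upwards [Metric.tendsto_nhds.1 (hconv g hg hgc) (ε / 3) (by positivity)] with n hn
  have h1 := hclose (ν n) ((hc n).trans (le_max_left _ _))
  have h2 := hclose ν₀ (le_max_right _ _)
  rw [Real.norm_eq_abs, abs_lt] at h1 h2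
  rw [Real.dist_eq, abs_lt] at hn ⊢
  constructor <;> linarith [h1.1, h1.2, h2.1, h2.2, hn.1, hn.2]

theorem tendsto_integral_of_compactSupport_euc {X : Type*} [NormedAddCommGroup X] [NormedSpace ℝ X]
    [FiniteDimensional ℝ X] [MeasurableSpace X] [BorelSpace X] {d : ℕ}
    {ν : ℕ → Measure X} [∀ n, IsFiniteMeasure (ν n)]
    {ν₀ : Measure X} [IsFiniteMeasure ν₀] {c : ℝ} (hc : ∀ n, (ν n).real univ ≤ c)
    (hconv : ∀ φ : X → ℝ, ContDiff ℝ (⊤ : ℕ∞) φ → HasCompactSupport φ →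
      Tendsto (fun n => ∫ x, φ x ∂(ν n)) atTop (𝓝 (∫ x, φ x ∂ν₀)))
    {f : X → Euc d} (hf : Continuous f) (hfs : HasCompactSupport f) :
    Tendsto (fun n => ∫ x, f x ∂(ν n)) atTop (𝓝 (∫ x, f x ∂ν₀)) := by
  have hcoord : ∀ (κ : Measure X) [IsFiniteMeasure κ] (i : Fin d),
      (∫ x, f x ∂κ) i = ∫ x, f x i ∂κ := fun κ _ i =>
    ((EuclideanSpace.proj (𝕜 := ℝ) i).integral_comp_comm
      (hf.integrable_of_hasCompactSupport hfs)).symm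
  refine (PiLp.homeomorph 2 fun _ : Fin d => ℝ).isInducing.tendsto_nhds_iff.2
    (tendsto_pi_nhds.2 fun i => ?_)
  change Tendsto (fun n => (∫ x, f x ∂(ν n)) i) atTop (𝓝 ((∫ x, f x ∂ν₀) i))
  simp only [hcoord]
  exact tendsto_integral_of_compactSupport hc hconv (by fun_prop)
    (hfs.comp_left (g := fun v : Euc d => v i) rfl)

/-! ### Cutoff in the momentum variable -/

/-- A continuous cutoff on `ℝ^d`: equal to `1` on the ball of radius `r` and to `0` outside the ball
of radius `r + 1`. -/
def radialCutoff {d : ℕ} (r : ℝ) (p : Euc d) : ℝ := max 0 (min 1 (r + 1 - ‖p‖))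

theorem radialCutoff_continuous {d : ℕ} (r : ℝ) : Continuous (radialCutoff (d := d) r) := by
  unfold radialCutoff; fun_prop

theorem radialCutoff_nonneg {d : ℕ} (r : ℝ) (p : Euc d) : 0 ≤ radialCutoff r p := le_max_left _ _

theorem radialCutoff_le_one {d : ℕ} (r : ℝ) (p : Euc d) : radialCutoff r p ≤ 1 :=
  max_le zero_le_one (min_le_left _ _)

theorem radialCutoff_eq_one {d : ℕ} {r : ℝ} {p : Euc d} (h : ‖p‖ ≤ r) : radialCutoff r p = 1 := by
  unfold radialCutoff
  rw [min_eq_left (by linarith), max_eq_right zero_le_one]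

theorem radialCutoff_eq_zero {d : ℕ} {r : ℝ} {p : Euc d} (h : r + 1 ≤ ‖p‖) :
    radialCutoff r p = 0 := by
  unfold radialCutoff
  exact max_eq_left ((min_le_right _ _).trans (by linarith))

/-! ### Convolutions on phase space -/

section Conv

variable {d : ℕ} {G : Euc d → Euc d}

theorem integrable_shift (hG : Continuous G) (hGs : HasCompactSupport G)
    (ν : Measure (Euc d × Euc d)) [IsFiniteMeasure ν] (q : Euc d) :
    Integrable (fun x : Euc d × Euc d => G (q - x.2)) ν := by
  obtain ⟨M, hM⟩ := hG.bounded_above_of_compact_support hGs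
  exact Integrable.of_bound (by fun_prop) M (Eventually.of_forall fun x => hM _)

theorem hasCompactSupport_cutoff_smul (hGs : HasCompactSupport G) (r : ℝ) (q : Euc d) :
    HasCompactSupport (fun x : Euc d × Euc d => radialCutoff r x.1 • G (q - x.2)) := by
  refine HasCompactSupport.intro ((isCompact_closedBall (0 : Euc d) (r + 1)).prod
    (hGs.isCompact.image (continuous_const.sub continuous_id : Continuous fun y => q - y))) ?_
  intro x hx
  by_cases h1 : ‖x.1‖ ≤ r + 1
  · have h2 : G (q - x.2) = 0 := by
      by_contra h
      exact hx ⟨by simpa using h1, q - x.2, subset_tsupport _ h, by simp⟩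
    rw [h2, smul_zero]
  · rw [radialCutoff_eq_zero (not_le.1 h1).le, zero_smul]

/-- Removing the cutoff costs at most the integral over the region where it differs from `1`. -/
theorem norm_integral_cutoff_sub_le (hG : Continuous G) (hGs : HasCompactSupport G)
    (ν : Measure (Euc d × Euc d)) [IsFiniteMeasure ν] (r : ℝ) (q : Euc d) :
    ‖(∫ x, G (q - x.2) ∂ν) - ∫ x, radialCutoff r x.1 • G (q - x.2) ∂ν‖ ≤
      ∫ x in {x : Euc d × Euc d | r < ‖x.1‖}, ‖G (q - x.2)‖ ∂ν := by
  have hi := integrable_shift hG hGs ν q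
  have hc : Continuous fun x : Euc d × Euc d => radialCutoff r x.1 • G (q - x.2) :=
    ((radialCutoff_continuous r).comp continuous_fst).smul (by fun_prop)
  have hms : MeasurableSet {x : Euc d × Euc d | r < ‖x.1‖} :=
    (isOpen_lt continuous_const (by fun_prop)).measurableSet
  rw [← integral_sub hi
    (hc.integrable_of_hasCompactSupport (hasCompactSupport_cutoff_smul hGs r q)),
    ← integral_indicator hms]
  refine norm_integral_le_of_norm_le (hi.norm.indicator hms) (Eventually.of_forall fun x => ?_)
  by_cases h : r < ‖x.1‖
  · rw [indicator_of_mem (show x ∈ {x : Euc d × Euc d | r < ‖x.1‖} from h)]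
    have : G (q - x.2) - radialCutoff r x.1 • G (q - x.2)
        = (1 - radialCutoff r x.1) • G (q - x.2) := by rw [sub_smul, one_smul]
    rw [this, norm_smul, Real.norm_of_nonneg (sub_nonneg.2 (radialCutoff_le_one _ _))]
    exact mul_le_of_le_one_left (norm_nonneg _) (by linarith [radialCutoff_nonneg r x.1])
  · rw [indicator_of_notMem (show x ∉ {x : Euc d × Euc d | r < ‖x.1‖} from h),
      radialCutoff_eq_one (not_lt.1 h)]
    simp

theorem tendsto_tail_integral (hG : Continuous G) (hGs : HasCompactSupport G)
    (ν : Measure (Euc d × Euc d)) [IsFiniteMeasure ν] (q : Euc d) :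
    Tendsto (fun r : ℝ => ∫ x in {x : Euc d × Euc d | r < ‖x.1‖}, ‖G (q - x.2)‖ ∂ν)
      atTop (𝓝 0) := by
  have hms : ∀ r : ℝ, MeasurableSet {x : Euc d × Euc d | r < ‖x.1‖} := fun r =>
    (isOpen_lt continuous_const (by fun_prop)).measurableSet
  have hanti : Antitone fun r : ℝ => {x : Euc d × Euc d | r < ‖x.1‖} := by
    intro r s hrs x hx
    simp only [mem_ofPred_eq] at hx ⊢
    exact hrs.trans_lt hx
  have h := tendsto_setIntegral_of_antitone hms hanti
    ⟨0, (integrable_shift hG hGs ν q).norm.integrableOn⟩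
  have he : (⋂ r : ℝ, {x : Euc d × Euc d | r < ‖x.1‖}) = ∅ := by
    ext x
    simp only [mem_iInter, mem_ofPred_eq, mem_empty_iff_false, iff_false, not_forall]
    exact ⟨‖x.1‖, lt_irrefl _⟩
  simpa [he] using h

/-- Tightness in `p` upgrades distributional convergence to convergence against the functions
`(p, q) ↦ G (q̄ - q)`, whose support is not compact in the `p` direction. -/
theorem tendsto_conv_pointwise (hG : Continuous G) (hGs : HasCompactSupport G)
    {ν : ℕ → Measure (Euc d × Euc d)} [∀ n, IsFiniteMeasure (ν n)]
    {ν₀ : Measure (Euc d × Euc d)} [IsFiniteMeasure ν₀] {c : ℝ} (hc : ∀ n, (ν n).real univ ≤ c)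
    (hconv : ∀ φ : Euc d × Euc d → ℝ, ContDiff ℝ (⊤ : ℕ∞) φ → HasCompactSupport φ →
      Tendsto (fun n => ∫ x, φ x ∂(ν n)) atTop (𝓝 (∫ x, φ x ∂ν₀)))
    (q : Euc d)
    (htight : Tendsto (fun r : ℝ =>
        ⨆ n, ∫ x in {x : Euc d × Euc d | r < ‖x.1‖}, ‖G (q - x.2)‖ ∂(ν n)) atTop (𝓝 0)) :
    Tendsto (fun n => ∫ x, G (q - x.2) ∂(ν n)) atTop (𝓝 (∫ x, G (q - x.2) ∂ν₀)) := by
  obtain ⟨M, hM⟩ := hG.bounded_above_of_compact_support hGs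
  have hM0 : 0 ≤ M := (norm_nonneg _).trans (hM 0)
  -- The suprema in the tightness condition are genuine: the tails are bounded by `M * c`.
  have hbdd : ∀ r : ℝ, BddAbove (range fun n =>
      ∫ x in {x : Euc d × Euc d | r < ‖x.1‖}, ‖G (q - x.2)‖ ∂(ν n)) := by
    intro r
    refine ⟨M * c, ?_⟩
    rintro _ ⟨n, rfl⟩
    calc ∫ x in {x : Euc d × Euc d | r < ‖x.1‖}, ‖G (q - x.2)‖ ∂(ν n)
        ≤ ∫ x, ‖G (q - x.2)‖ ∂(ν n) :=
          setIntegral_le_integral (integrable_shift hG hGs (ν n) q).norm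
            (Eventually.of_forall fun _ => norm_nonneg _)
      _ ≤ ‖∫ x, ‖G (q - x.2)‖ ∂(ν n)‖ := le_abs_self _
      _ ≤ M * (ν n).real univ := norm_integral_le_of_norm_le_const
          (Eventually.of_forall fun x => by simpa using hM _)
      _ ≤ M * c := mul_le_mul_of_nonneg_left (hc n) hM0
  rw [Metric.tendsto_nhds]
  intro ε hε
  have hε3 : 0 < ε / 3 := by positivity
  obtain ⟨r, hr1, hr2⟩ := ((htight.eventually (gt_mem_nhds hε3)).and
    ((tendsto_tail_integral hG hGs ν₀ q).eventually (gt_mem_nhds hε3))).exists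
  have hcut := tendsto_integral_of_compactSupport_euc hc hconv
    (f := fun x : Euc d × Euc d => radialCutoff r x.1 • G (q - x.2)) (((radialCutoff_continuous r).comp continuous_fst).smul
      (show Continuous fun x : Euc d × Euc d => G (q - x.2) by fun_prop))
    (hasCompactSupport_cutoff_smul hGs r q)
  filter_upwards [Metric.tendsto_nhds.1 hcut (ε / 3) hε3] with n hn
  have h1 := (norm_integral_cutoff_sub_le hG hGs (ν n) r q).trans_lt
    ((le_ciSup (hbdd r) n).trans_lt hr1)
  have h2 := (norm_integral_cutoff_sub_le hG hGs ν₀ r q).trans_lt hr2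
  rw [← dist_eq_norm] at h1 h2
  rw [dist_comm] at h2
  exact (dist_triangle4 _ _ _ _).trans_lt (by linarith)

/-- The functions `q̄ ↦ ∫ G (q̄ - q) dν` share one modulus of continuity when the masses of the
measures are bounded, because `G` is uniformly continuous. -/
theorem uniformEquicontinuous_conv (hG : Continuous G) (hGs : HasCompactSupport G) {ι : Type*}
    {ν : ι → Measure (Euc d × Euc d)} [∀ n, IsFiniteMeasure (ν n)] {c : ℝ} (hc0 : 0 ≤ c)
    (hc : ∀ n, (ν n).real univ ≤ c) :
    UniformEquicontinuous fun n (q : Euc d) => ∫ x, G (q - x.2) ∂(ν n) := by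
  rw [Metric.uniformEquicontinuous_iff]
  intro ε hε
  obtain ⟨δ, hδ, h⟩ := Metric.uniformContinuous_iff.1
    (hGs.uniformContinuous_of_continuous hG) (ε / (c + 1)) (by positivity)
  refine ⟨δ, hδ, fun x y hxy n => ?_⟩
  rw [dist_eq_norm]
  refine (norm_integral_sub_le (integrable_shift hG hGs _ _) (integrable_shift hG hGs _ _)
    (by positivity) (hc n) fun z => ?_).trans_lt (b := ε / (c + 1) * c) ?_
  · rw [← dist_eq_norm]
    exact (h (by simpa using hxy)).le
  · rw [div_mul_eq_mul_div, div_lt_iff₀ (by positivity)]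
    nlinarith

end Conv

/-- On a compact set, pointwise convergence of an equicontinuous family is uniform. -/
theorem tendstoUniformlyOn_of_equicontinuous {A B : Type*} [TopologicalSpace A] [UniformSpace B]
    {F : ℕ → A → B} {f : A → B} (hF : Equicontinuous F)
    (hf : ∀ a, Tendsto (fun n => F n a) atTop (𝓝 (f a))) {K : Set A} (hK : IsCompact K) :
    TendstoUniformlyOn F f atTop K := by
  have h := (EquicontinuousOn.tendsto_uniformOnFun_iff_pi' (𝔖 := {K}) (F := F)
    (by rintro _ rfl; exact hK) (fun _ _ => hF.equicontinuousOn _) atTop f).2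
    (tendsto_pi_nhds.2 fun a => hf a)
  exact UniformOnFun.tendsto_iff_tendstoUniformlyOn.1 h K rfl

/-! ### Integrals depending on the convolution -/

/-- Convergence of integrals of nonlinear expressions `H (x, gₙ (x.2))` with `H` vanishing for `x`
off a compact set and Lipschitz in its second argument. -/
theorem tendsto_integral_comp {d : ℕ}
    {ν : ℕ → Measure (Euc d × Euc d)} [∀ n, IsFiniteMeasure (ν n)]
    {ν₀ : Measure (Euc d × Euc d)} [IsFiniteMeasure ν₀] {c : ℝ} (hc : ∀ n, (ν n).real univ ≤ c)
    (hconv : ∀ φ : Euc d × Euc d → ℝ, ContDiff ℝ (⊤ : ℕ∞) φ → HasCompactSupport φ →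
      Tendsto (fun n => ∫ x, φ x ∂(ν n)) atTop (𝓝 (∫ x, φ x ∂ν₀)))
    {g : ℕ → Euc d → Euc d} {g₀ : Euc d → Euc d} (hg : ∀ n, Continuous (g n))
    (hg₀ : Continuous g₀)
    (hgg : ∀ K : Set (Euc d), IsCompact K → TendstoUniformlyOn g g₀ atTop K)
    {H : Euc d × Euc d → Euc d → ℝ} (hH : Continuous fun z : (Euc d × Euc d) × Euc d => H z.1 z.2)
    {K : Set (Euc d × Euc d)} (hK : IsCompact K) (hHK : ∀ x ∉ K, ∀ u, H x u = 0)
    {M : ℝ} (hM : 0 ≤ M) (hLip : ∀ x u v, |H x u - H x v| ≤ M * ‖u - v‖) :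
    Tendsto (fun n => ∫ x, H x (g n x.2) ∂(ν n)) atTop (𝓝 (∫ x, H x (g₀ x.2) ∂ν₀)) := by
  have hcont : ∀ u : Euc d → Euc d, Continuous u → Continuous fun x => H x (u x.2) :=
    fun u hu => hH.comp (continuous_id.prodMk (hu.comp continuous_snd))
  have hsupp : ∀ u : Euc d → Euc d, HasCompactSupport fun x => H x (u x.2) :=
    fun u => HasCompactSupport.intro hK fun x hx => hHK x hx _
  refine tendsto_integral_of_uniform hc
    (fun n => (hcont _ (hg n)).integrable_of_hasCompactSupport (hsupp _))
    (fun n => (hcont _ hg₀).integrable_of_hasCompactSupport (hsupp _)) ?_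
    (tendsto_integral_of_compactSupport hc hconv (hcont _ hg₀) (hsupp _))
  intro ε hε
  filter_upwards [Metric.tendstoUniformlyOn_iff.1 (hgg _ (hK.image continuous_snd))
    (ε / (M + 1)) (by positivity)] with n hn x
  by_cases hx : x ∈ K
  · have h := hn x.2 ⟨x, hx, rfl⟩
    rw [dist_comm, dist_eq_norm] at h
    calc ‖H x (g n x.2) - H x (g₀ x.2)‖ ≤ M * ‖g n x.2 - g₀ x.2‖ := hLip _ _ _
      _ ≤ M * (ε / (M + 1)) := by gcongr
      _ ≤ ε := by
        rw [mul_div_assoc', div_le_iff₀ (by positivity)]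
        nlinarith
  · rw [hHK x hx, hHK x hx, sub_zero, norm_zero]
    exact hε.le

theorem abs_sqrt_sub_sqrt_le {d : ℕ} (a b p : Euc d) :
    |√(‖a‖ ^ 2 + ‖p‖ ^ 2) - √(‖b‖ ^ 2 + ‖p‖ ^ 2)| ≤ ‖a - b‖ := by
  have key : ∀ u v : Euc d,
      √(‖u‖ ^ 2 + ‖p‖ ^ 2) ≤ √(‖v‖ ^ 2 + ‖p‖ ^ 2) + ‖u - v‖ := by
    intro u v
    have h1 : ‖u‖ ≤ ‖v‖ + ‖u - v‖ := by
      simpa [add_comm] using norm_add_le (u - v) v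
    have h2 : ‖v‖ ≤ √(‖v‖ ^ 2 + ‖p‖ ^ 2) := Real.le_sqrt_of_sq_le (by nlinarith)
    have h3 := Real.sq_sqrt (show 0 ≤ ‖v‖ ^ 2 + ‖p‖ ^ 2 by positivity)
    refine Real.sqrt_le_iff.2 ⟨by positivity, ?_⟩
    nlinarith [norm_nonneg u, norm_nonneg v, norm_nonneg (u - v)]
  rw [abs_le]
  have := key b a
  rw [norm_sub_rev] at this
  constructor <;> linarith [key a b]

/-! ### Convergence of the fields and of the integrals -/

/-- under a tightness-in-`p` condition, distributional convergence of the
measures yields locally uniform convergence of `∇W⋆μ_n` and of the velocity fields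
`V_{μ_n}`, and convergence of `∫⟨Ξ, V_{μ_n}⟩ dμ_n` and `∫ φ|V_{μ_n}| dμ_n`. -/
theorem stmt10 {d : ℕ} (hd : 0 < d)
    (W : Euc d → ℝ) (hW : ContDiff ℝ 2 W) (hWc : HasCompactSupport W)
    (μn : ℕ → Measure (Euc d × Euc d)) (μ : Measure (Euc d × Euc d))
    (hfin : ∀ n, IsFiniteMeasure (μn n)) [IsFiniteMeasure μ]
    (hmass : ∃ C : ℝ≥0∞, C ≠ ⊤ ∧ ∀ n, μn n univ ≤ C)
    (hconv : ∀ φ : Euc d × Euc d → ℝ, ContDiff ℝ (⊤ : ℕ∞) φ → HasCompactSupport φ →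
      Tendsto (fun n => ∫ x, φ x ∂(μn n)) atTop (nhds (∫ x, φ x ∂μ)))
    (htight : ∀ qbar : Euc d,
      Tendsto (fun r : ℝ =>
          ⨆ n, ∫ x in {x : Euc d × Euc d | r < ‖x.1‖}, ‖gradient W (qbar - x.2)‖ ∂(μn n))
        atTop (nhds 0))
    (Φ : Euc d → ℝ) (hΦ : ContDiff ℝ 2 Φ) :
    (∀ K : Set (Euc d), IsCompact K →
      TendstoUniformlyOn (fun n => gradWconv W (μn n)) (gradWconv W μ) atTop K) ∧
    (∀ K : Set (Euc d × Euc d), IsCompact K →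
      TendstoUniformlyOn (fun n => Vfield Φ W (μn n)) (Vfield Φ W μ) atTop K) ∧
    (∀ Ξ : Euc d × Euc d → Euc d × Euc d, ContDiff ℝ (⊤ : ℕ∞) Ξ → HasCompactSupport Ξ →
      Tendsto
        (fun n => ∫ x, (⟪(Ξ x).1, (Vfield Φ W (μn n) x).1⟫ +
            ⟪(Ξ x).2, (Vfield Φ W (μn n) x).2⟫) ∂(μn n)) atTop
        (nhds (∫ x, (⟪(Ξ x).1, (Vfield Φ W μ x).1⟫ +
            ⟪(Ξ x).2, (Vfield Φ W μ x).2⟫) ∂μ))) ∧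
    (∀ φ : Euc d × Euc d → ℝ, ContDiff ℝ (⊤ : ℕ∞) φ → HasCompactSupport φ →
      Tendsto
        (fun n => ∫ x,
          φ x * Real.sqrt (‖(Vfield Φ W (μn n) x).1‖ ^ 2 + ‖(Vfield Φ W (μn n) x).2‖ ^ 2)
            ∂(μn n)) atTop
        (nhds (∫ x,
          φ x * Real.sqrt (‖(Vfield Φ W μ x).1‖ ^ 2 + ‖(Vfield Φ W μ x).2‖ ^ 2) ∂μ))) := by
  have := hfin
  obtain ⟨C, hC, hmass⟩ := hmass
  have hc : ∀ n, (μn n).real univ ≤ C.toReal := fun n => ENNReal.toReal_mono hC (hmass n)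
  have hG := gradient_continuous hW
  have hGs := gradient_hasCompactSupport hWc
  have hequi : Equicontinuous fun n => gradWconv W (μn n) :=
    (uniformEquicontinuous_conv hG hGs ENNReal.toReal_nonneg hc).equicontinuous
  have hcont : ∀ n, Continuous (gradWconv W (μn n)) := fun n => hequi.continuous n
  have hcont₀ : Continuous (gradWconv W μ) :=
    (uniformEquicontinuous_conv (ν := fun _ : Unit => μ) hG hGs measureReal_nonneg
      (fun _ => le_rfl)).equicontinuous.continuous ()
  have hunif : ∀ K : Set (Euc d), IsCompact K →
      TendstoUniformlyOn (fun n => gradWconv W (μn n)) (gradWconv W μ) atTop K :=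
    fun K hK => tendstoUniformlyOn_of_equicontinuous hequi
      (fun q => tendsto_conv_pointwise hG hGs hc hconv q (htight q)) hK
  have hΦc := gradient_continuous hΦ
  refine ⟨hunif, fun K hK => ?_, fun Ξ hΞ hΞs => ?_, fun φ hφ hφs => ?_⟩
  · rw [Metric.tendstoUniformlyOn_iff]
    intro ε hε
    filter_upwards [Metric.tendstoUniformlyOn_iff.1 (hunif _ (hK.image continuous_snd)) ε hε]
      with n hn x hx
    have h := hn x.2 ⟨x, hx, rfl⟩
    simp only [Vfield, Prod.dist_eq, dist_self, dist_sub_left]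
    exact max_lt h hε
  · obtain ⟨M, hM⟩ := hΞ.continuous.bounded_above_of_compact_support hΞs
    refine tendsto_integral_comp hc hconv hcont hcont₀ hunif
      (H := fun x u => ⟪(Ξ x).1, -gradient Φ x.2 - u⟫ + ⟪(Ξ x).2, x.1⟫) (M := M)
      ?_ hΞs.isCompact (fun x hx u => ?_) ((norm_nonneg _).trans (hM 0)) (fun x u v => ?_)
    · have := hΞ.continuous
      fun_prop
    · simp [image_eq_zero_of_notMem_tsupport hx]
    · have : ⟪(Ξ x).1, -gradient Φ x.2 - u⟫ + ⟪(Ξ x).2, x.1⟫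
          - (⟪(Ξ x).1, -gradient Φ x.2 - v⟫ + ⟪(Ξ x).2, x.1⟫) = ⟪(Ξ x).1, v - u⟫ := by
        simp only [inner_sub_right]
        ring
      rw [this, norm_sub_rev]
      exact (abs_real_inner_le_norm _ _).trans
        (mul_le_mul_of_nonneg_right ((norm_fst_le _).trans (hM x)) (norm_nonneg _))
  · obtain ⟨M, hM⟩ := hφ.continuous.bounded_above_of_compact_support hφs
    refine tendsto_integral_comp hc hconv hcont hcont₀ hunif
      (H := fun x u => φ x * √(‖-gradient Φ x.2 - u‖ ^ 2 + ‖x.1‖ ^ 2)) (M := M)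
      ?_ hφs.isCompact (fun x hx u => ?_) ((norm_nonneg _).trans (hM 0)) (fun x u v => ?_)
    · have := hφ.continuous
      fun_prop
    · simp [image_eq_zero_of_notMem_tsupport hx]
    · rw [← mul_sub, abs_mul]
      refine mul_le_mul (hM x) ((abs_sqrt_sub_sqrt_le _ _ _).trans_eq ?_) (abs_nonneg _)
        ((norm_nonneg _).trans (hM 0))
      rw [sub_sub_sub_cancel_left, norm_sub_rev]
end
end

section
/- Let (p_t, q_t) be a trajectory on [0,T] of the single-particle system (q̇_t = p_t, ṗ_t = −∇Φ(q_t) − ∇_qΨ(t, q_t)), and let I ⊆ [0,T] be an interval on which q_t ≠ 0 and the radial speed (d/dt)|q_t| is strictly positive. Then the auxiliary Hamiltonian t ↦ H̃(p_t, q_t) = ½⟨p_t, q_t/|q_t|⟩² + u(|q_t|) is strictly increasing on I. -/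
/-! The radial momentum `v = ⟪p, q/‖q‖⟫` is the derivative of `r = ‖q‖`. Where `p` is differentiable,
`v' = ⟪ṗ, q/‖q‖⟫ + (‖p‖² - v²)/‖q‖`; the centrifugal term is nonnegative by Cauchy–Schwarz
(`htilde_deriv_pos`), and the lower bound on `u'` gives `v' + u'(r) > 0`, so
`d/dt H̃ = v (v' + u'(r)) > 0` wherever `v > 0`.

Since `p` is only the integral of an integrable force, this computation is valid only for almost
every `t`. Pointwise positivity of the derivative off a null set does not imply monotonicity by
itself; what makes it work is that `H̃(p_t, q_t)` is absolutely continuous, so that its increments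
are the integrals of its derivative (`AbsolutelyContinuousOnInterval.lt_of_ae_hasDerivAt_pos`). -/

open MeasureTheory Set Filter Topology
open scoped RealInnerProductSpace

noncomputable section

/-- A trajectory on `[0,T]` of the single-particle system `q̇_t = p_t`,
`ṗ_t = −∇Φ(q_t) − ∇_qΨ(t, q_t)`: `q` is of class `C¹` with derivative `p`, and `p` is
locally absolutely continuous with the stated a.e. derivative (integral form). -/
structure IsTrajectory {d : ℕ} (T : ℝ) (Φ : Euc d → ℝ) (Ψ : ℝ → Euc d → ℝ)
    (p q : ℝ → Euc d) : Prop where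
  hq : ∀ t ∈ Icc (0:ℝ) T, HasDerivWithinAt q (p t) (Icc (0:ℝ) T) t
  contp : ContinuousOn p (Icc (0:ℝ) T)
  intF : IntervalIntegrable (fun s => -gradient Φ (q s) - gradient (Ψ s) (q s)) volume 0 T
  hp : ∀ t ∈ Icc (0:ℝ) T,
    p t = p 0 + ∫ s in (0:ℝ)..t, (-gradient Φ (q s) - gradient (Ψ s) (q s))

/-- The auxiliary Hamiltonian `H̃(p,q) = ½⟨p, q/|q|⟩² + u(|q|)`. -/
def Htilde {d : ℕ} (u : ℝ → ℝ) (p q : Euc d) : ℝ :=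
  (1 / 2) * ⟪p, ‖q‖⁻¹ • q⟫ ^ 2 + u ‖q‖

lemma AbsolutelyContinuousOnInterval.congr_uIcc {f g : ℝ → ℝ} {a b : ℝ}
    (hf : AbsolutelyContinuousOnInterval f a b) (h : EqOn f g (uIcc a b)) :
    AbsolutelyContinuousOnInterval g a b := by
  rw [absolutelyContinuousOnInterval_iff] at hf ⊢
  intro ε hε
  obtain ⟨δ, hδ, H⟩ := hf ε hε
  refine ⟨δ, hδ, fun E hE hlen => ?_⟩
  convert H E hE hlen using 1
  refine Finset.sum_congr rfl fun i hi => ?_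
  rw [h (hE.1 i hi).1, h (hE.1 i hi).2]

lemma AbsolutelyContinuousOnInterval.of_hasDerivWithinAt {f f' : ℝ → ℝ} {a b : ℝ} (hab : a ≤ b)
    (hf : ∀ t ∈ Icc a b, HasDerivWithinAt f (f' t) (Icc a b) t)
    (hf' : ContinuousOn f' (Icc a b)) : AbsolutelyContinuousOnInterval f a b := by
  obtain ⟨C, hC⟩ := isCompact_Icc.exists_bound_of_continuousOn hf'
  have : LipschitzOnWith C.toNNReal f (uIcc a b) := by
    rw [uIcc_of_le hab]
    refine (convex_Icc a b).lipschitzOnWith_of_nnnorm_hasDerivWithin_le hf fun t ht => ?_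
    rw [← NNReal.coe_le_coe]
    exact (hC t ht).trans (Real.le_coe_toNNReal C)
  exact this.absolutelyContinuousOnInterval

lemma AbsolutelyContinuousOnInterval.finset_sum {ι : Type*} (s : Finset ι) {f : ι → ℝ → ℝ}
    {a b : ℝ} (hf : ∀ i ∈ s, AbsolutelyContinuousOnInterval (f i) a b) :
    AbsolutelyContinuousOnInterval (fun t => ∑ i ∈ s, f i t) a b := by
  classical
  induction s using Finset.induction_on with
  | empty =>
    simpa using ((LipschitzWith.const (0 : ℝ)).lipschitzOnWith
      (s := uIcc a b)).absolutelyContinuousOnInterval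
  | insert i s hi ih =>
    simp only [Finset.sum_insert hi]
    exact (hf i (by simp)).add (ih fun j hj => hf j (by simp [hj]))

/-- Increments of an absolutely continuous function are integrals of its derivative, so
positivity of the derivative almost everywhere suffices. -/
lemma AbsolutelyContinuousOnInterval.lt_of_ae_hasDerivAt_pos {f : ℝ → ℝ} {a b : ℝ} (hab : a < b)
    (hf : AbsolutelyContinuousOnInterval f a b)
    (h : ∀ᵐ t, t ∈ Ioo a b → ∃ f', HasDerivAt f f' t ∧ 0 < f') : f a < f b := by
  rw [← sub_pos, ← hf.integral_deriv_eq_sub]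
  have hpos : ∀ᵐ t, t ∈ Ioc a b → 0 < deriv f t := by
    have hb : ∀ᵐ t : ℝ, t ≠ b := by simp [ae_iff, measure_singleton]
    filter_upwards [h, hb] with t ht htb hmem
    obtain ⟨f', h1, h2⟩ := ht ⟨hmem.1, lt_of_le_of_ne hmem.2 htb⟩
    rwa [h1.deriv]
  have hpos' : ∀ᵐ t ∂volume.restrict (Ioc a b), 0 < deriv f t :=
    (ae_restrict_iff' measurableSet_Ioc).2 hpos
  rw [intervalIntegral.integral_pos_iff_support_of_nonneg_ae' (by
    rw [uIoc_of_le hab.le]; exact hpos'.mono fun t ht => ht.le) hf.intervalIntegrable_deriv]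
  refine ⟨hab, ?_⟩
  have : volume (Ioc a b) ≤ volume (Function.support (deriv f) ∩ Ioc a b) := by
    refine measure_mono_ae ?_
    filter_upwards [hpos] with t ht hmem
    exact ⟨(ht hmem).ne', hmem⟩
  exact lt_of_lt_of_le (by simp [hab]) this

lemma HasDerivWithinAt.norm_of_ne_zero {E : Type*} [NormedAddCommGroup E] [InnerProductSpace ℝ E]
    {q : ℝ → E} {p : E} {s : Set ℝ} {t : ℝ} (h : HasDerivWithinAt q p s t) (h0 : q t ≠ 0) :
    HasDerivWithinAt (fun x => ‖q x‖) (⟪p, q t⟫ * ‖q t‖⁻¹) s t := by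
  have hn : ‖q t‖ ≠ 0 := norm_ne_zero_iff.2 h0
  have := h.norm_sq.sqrt (pow_ne_zero 2 hn)
  simp only [Real.sqrt_sq (norm_nonneg _)] at this
  convert this using 1
  rw [real_inner_comm]
  field_simp

/-- The formal time derivative of the auxiliary Hamiltonian is positive: `G` and `P` stand for
`∇Φ` and `∇Ψ`, so that the force is `-G - P`, and `w` stands for `u'(‖q‖)`. -/
lemma htilde_deriv_pos {E : Type*} [NormedAddCommGroup E] [InnerProductSpace ℝ E]
    {p q G P : E} {B w : ℝ} (hq : q ≠ 0) (hP : ‖P‖ < B) (hw : B + ⟪G, ‖q‖⁻¹ • q⟫ ≤ w)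
    (hv : 0 < ⟪p, q⟫ * ‖q‖⁻¹) :
    0 < (⟪p, q⟫ * ‖q‖⁻¹) * (((⟪p, p⟫ + ⟪-G - P, q⟫) * ‖q‖⁻¹ +
      ⟪p, q⟫ * (-(⟪p, q⟫ * ‖q‖⁻¹) / ‖q‖ ^ 2)) + w) := by
  refine mul_pos hv ?_
  have hr : 0 < ‖q‖ := norm_pos_iff.2 hq
  have hPq : ⟪P, q⟫ < B * ‖q‖ :=
    (real_inner_le_norm P q).trans_lt (mul_lt_mul_of_pos_right hP hr)
  rw [real_inner_smul_right] at hw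
  have hPq' : ⟪P, q⟫ * ‖q‖⁻¹ < B := by rwa [← div_eq_mul_inv, div_lt_iff₀ hr]
  have hcs : 0 ≤ ⟪p, p⟫ * ‖q‖⁻¹ + ⟪p, q⟫ * (-(⟪p, q⟫ * ‖q‖⁻¹) / ‖q‖ ^ 2) := by
    have h1 := real_inner_mul_inner_self_le p q
    rw [real_inner_self_eq_norm_sq q] at h1
    have : ⟪p, p⟫ * ‖q‖⁻¹ + ⟪p, q⟫ * (-(⟪p, q⟫ * ‖q‖⁻¹) / ‖q‖ ^ 2) =
        (⟪p, p⟫ * ‖q‖ ^ 2 - ⟪p, q⟫ * ⟪p, q⟫) / ‖q‖ ^ 3 := by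
      field_simp
      ring
    rw [this]
    exact div_nonneg (sub_nonneg.2 h1) (by positivity)
  rw [inner_sub_left, inner_neg_left]
  nlinarith

/-- on any interval where the radial speed `d|q_t|/dt` is strictly positive
(and `q_t ≠ 0`), the auxiliary Hamiltonian `H̃(p_t, q_t)` is strictly increasing. -/
theorem stmt14 {d : ℕ} (hd : 0 < d) {T B : ℝ} (hT : 0 < T) (hB : 0 < B)
    (Φ : Euc d → ℝ) (hΦ : ContDiff ℝ 2 Φ)
    (Ψ : ℝ → Euc d → ℝ) (hΨ : ∀ t, ContDiff ℝ 2 (Ψ t))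
    (hΨmeas : ∀ x : Euc d, Measurable fun t => Ψ t x)
    (hΨB : ∀ t ∈ Icc (0:ℝ) T, ∀ x : Euc d, ‖gradient (Ψ t) x‖ < B)
    (u : ℝ → ℝ) (hu : ContDiff ℝ 2 u)
    (hu' : ∀ r : ℝ, 0 < r → ∀ x : Euc d, ‖x‖ = r →
      B + ⟪gradient Φ x, ‖x‖⁻¹ • x⟫ ≤ deriv u r)
    (p q : ℝ → Euc d) (htraj : IsTrajectory T Φ Ψ p q)
    (I : Set ℝ) (hI : I ⊆ Icc (0:ℝ) T) (hIconn : I.OrdConnected)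
    (hpos : ∀ t ∈ I, q t ≠ 0 ∧ 0 < deriv (fun s => ‖q s‖) t) :
    StrictMonoOn (fun t => Htilde u (p t) (q t)) I := by
  intro a ha b hb hab
  have hsub : Icc a b ⊆ I := hIconn.out ha hb
  have hsubT : Icc a b ⊆ Icc 0 T := hsub.trans hI
  have ha0 : 0 ≤ a := (hI ha).1
  have hbT : b ≤ T := (hI hb).2
  have hne : ∀ t ∈ Icc a b, q t ≠ 0 := fun t ht => (hpos t (hsub ht)).1
  have hr0 : ∀ t ∈ Icc a b, ‖q t‖ ≠ 0 := fun t ht => norm_ne_zero_iff.2 (hne t ht)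
  have hq : ∀ t ∈ Icc a b, HasDerivWithinAt q (p t) (Icc a b) t := fun t ht =>
    (htraj.hq t (hsubT ht)).mono hsubT
  have hqc : ContinuousOn q (Icc a b) := fun t ht => (hq t ht).continuousWithinAt
  have hpc : ContinuousOn p (Icc a b) := htraj.contp.mono hsubT
  have hr : ∀ t ∈ Icc a b,
      HasDerivWithinAt (fun s => ‖q s‖) (⟪p t, q t⟫ * ‖q t‖⁻¹) (Icc a b) t := fun t ht =>
    (hq t ht).norm_of_ne_zero (hne t ht)
  have hvc : ContinuousOn (fun t => ⟪p t, q t⟫ * ‖q t‖⁻¹) (Icc a b) :=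
    (hpc.inner hqc).mul (hqc.norm.inv₀ hr0)
  have hu1 : Differentiable ℝ u := hu.differentiable (by norm_num)
  have huc : Continuous (deriv u) := hu.continuous_deriv (by norm_num)
  have hrinvAC : AbsolutelyContinuousOnInterval (fun t => ‖q t‖⁻¹) a b :=
    .of_hasDerivWithinAt hab.le (fun t ht => (hr t ht).fun_inv (hr0 t ht))
      (hvc.neg.div (hqc.norm.pow 2) fun t ht => pow_ne_zero 2 (hr0 t ht))
  have huAC : AbsolutelyContinuousOnInterval (fun t => u ‖q t‖) a b :=
    .of_hasDerivWithinAt hab.le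
      (fun t ht => (hu1 ‖q t‖).hasDerivAt.comp_hasDerivWithinAt t (hr t ht))
      ((huc.comp_continuousOn hqc.norm).mul hvc)
  have hqAC : ∀ i, AbsolutelyContinuousOnInterval (fun t => q t i) a b := fun i =>
    .of_hasDerivWithinAt hab.le (f' := fun t => p t i)
      (fun t ht => (EuclideanSpace.proj i : Euc d →L[ℝ] ℝ).hasFDerivAt.comp_hasDerivWithinAt t (hq t ht))
      ((EuclideanSpace.proj i : Euc d →L[ℝ] ℝ).continuous.comp_continuousOn hpc)
  -- Absolute continuity of an indefinite integral is available for real integrands only, hence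
  -- the passage to coordinates.
  have hpAC : ∀ i, AbsolutelyContinuousOnInterval (fun t => p t i) a b := by
    intro i
    set L : Euc d →L[ℝ] ℝ := EuclideanSpace.proj i with hL
    have hLF : IntervalIntegrable
        (fun s => L (-gradient Φ (q s) - gradient (Ψ s) (q s))) volume 0 T :=
      ⟨L.integrable_comp htraj.intF.1, L.integrable_comp htraj.intF.2⟩
    have h1 := hLF.absolutelyContinuousOnInterval_intervalIntegral (c := 0) (by simp)
    have h2 : AbsolutelyContinuousOnInterval (fun _ : ℝ => L (p 0)) 0 T :=
      ((LipschitzWith.const (L (p 0))).lipschitzOnWith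
        (s := uIcc 0 T)).absolutelyContinuousOnInterval
    refine ((h2.add h1).mono (c := a) (d := b) ?_).congr_uIcc fun t ht => ?_
    · rwa [uIcc_of_le hab.le, uIcc_of_le hT.le]
    · rw [uIcc_of_le hab.le] at ht
      have hsubt : uIcc 0 t ⊆ uIcc 0 T := by
        rw [uIcc_of_le (hsubT ht).1, uIcc_of_le hT.le]
        exact Icc_subset_Icc_right (hsubT ht).2
      change L (p 0) + (∫ s in (0:ℝ)..t, L _) = L (p t)
      rw [L.intervalIntegral_comp_comm (htraj.intF.mono_set hsubt), ← map_add,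
        ← htraj.hp t (hsubT ht)]
  have hNAC : AbsolutelyContinuousOnInterval (fun t => ⟪p t, q t⟫) a b := by
    have h := AbsolutelyContinuousOnInterval.finset_sum Finset.univ
      fun i _ => (hpAC i).mul (hqAC i)
    refine h.congr_uIcc fun t _ => ?_
    simp [PiLp.inner_apply, mul_comm]
  have hvAC := hNAC.fun_mul hrinvAC
  have hHAC := ((hvAC.fun_mul hvAC).const_mul (1 / 2)).fun_add huAC
  have hH : ∀ t, Htilde u (p t) (q t) =
      1 / 2 * ((⟪p t, q t⟫ * ‖q t‖⁻¹) * (⟪p t, q t⟫ * ‖q t‖⁻¹)) + u ‖q t‖ := by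
    intro t
    rw [Htilde, real_inner_smul_right]
    ring
  change Htilde u (p a) (q a) < Htilde u (p b) (q b)
  rw [hH, hH]
  refine hHAC.lt_of_ae_hasDerivAt_pos hab ?_
  filter_upwards [htraj.intF.ae_hasDerivAt_integral] with t hFt ht
  have htI : t ∈ Icc a b := Ioo_subset_Icc_self ht
  have hnhds : Icc a b ∈ 𝓝 t := Icc_mem_nhds ht.1 ht.2
  have hpd : HasDerivAt p (-gradient Φ (q t) - gradient (Ψ t) (q t)) t := by
    refine ((hFt (by rw [uIcc_of_le hT.le]; exact hsubT htI) 0 (by simp)).const_add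
      (p 0)).congr_of_eventuallyEq ?_
    filter_upwards [hnhds] with s hs using htraj.hp s (hsubT hs)
  have hqd : HasDerivAt q (p t) t := (hq t htI).hasDerivAt hnhds
  have hrd := (hr t htI).hasDerivAt hnhds
  -- In the interior of `[a, b]` the two-sided derivative in `hpos` is the radial momentum.
  have hvpos : 0 < ⟪p t, q t⟫ * ‖q t‖⁻¹ := hrd.deriv ▸ (hpos t (hsub htI)).2
  have hvd := (hpd.inner ℝ hqd).fun_mul (hrd.fun_inv (hr0 t htI))
  have hHd := ((hvd.fun_mul hvd).const_mul (1 / 2)).fun_add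
    ((hu1 ‖q t‖).hasDerivAt.comp t hrd)
  refine ⟨_, hHd, ?_⟩
  convert htilde_deriv_pos (hne t htI) (hΨB t (hsubT htI) (q t))
    (hu' ‖q t‖ (norm_pos_iff.2 (hne t htI)) (q t) rfl) hvpos using 1
  ring
end
end

section
/- Fix T > 0 and α_0 > 0. Let W ∈ C²(ℝ^d) be even with compact support, let Φ ∈ C²(ℝ^d) satisfy |Φ(q)| ≤ B₁|q|^{b₂} for some constants B₁, b₂, and let μ_0 be a Borel probability measure on ℝ^{2d} with ∫ e^{α_0|x|} dμ_0(x) < ∞. Assume the dynamical hypothesis: there exist B > sup_{q} |∇W(q)| and u ∈ C²(ℝ) with u'(r) ≥ B + max_{|q|=r} ⟨∇Φ(q), q/|q|⟩ for all r > 0, together with a sequence (q_L^⋆)_{L∈ℕ} in ℝ^d with |q_L^⋆| strictly increasing to ∞ such that for every L, u(s) < u(|q_L^⋆|) for all s > |q_L^⋆|. Then there exists a family (μ_t)_{t∈[0,T]} of finite Borel measures on ℝ^{2d}, equal to μ_0 at t = 0, such that: (i) μ_t(ℝ^{2d}) ≤ 1 for all t ∈ [0,T] and t ↦ ∫ φ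 dμ_t is continuous on [0,T] for every φ ∈ C_c^∞(ℝ^{2d}); (ii) (μ_t) solves the Hamiltonian ODE ∂_tμ_t + ∇·(V_{μ_t} μ_t) = 0 in the sense of distributions: for every φ ∈ C_c^∞(ℝ^{2d} × (0,T)), ∫_0^T ∫ [∂_tφ − ⟨∇_pφ, ∇(Φ + W⋆μ_t)(q)⟩ + ⟨∇_qφ, p⟩] dμ_t(p,q) dt = 0. -/
/-!
The solution is a vague limit of laws of truncated particle systems. For each ring radius `R` the
external force `∇Φ` is replaced by `∇Φ ∘ radialProj R`, which is bounded and Lipschitz, so that the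
mean-field Newton system has a global flow with initial law `μ₀` (`exists_meanField_flow`, a
contraction in a weighted space of maps). The laws at time `t` tested against a fixed smooth
compactly supported function are Lipschitz in `t`, uniformly in `R`, so a subsequence converges
vaguely at every time, to measures of mass at most one (`exists_subseq_vague`). The test-function
bounds pass to the limit and give continuity in time.

The nonlinear term `∇W ⋆ μ_t` does not see the momentum, so vague convergence alone does not pass
to the limit in it: momenta might escape to infinity above a bounded set of positions. The rings
exclude this. Outside the ball of radius `ρ = |q_L^⋆|` the radial acceleration exceeds `-u'(r)`
(with `u'(r)` frozen at its value at `R` beyond the truncation radius), so a particle that crosses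
the ring outwards has energy `ṙ² / 2 + u(r)` increasing while `ṙ > 0`; since `u < u(ρ)` outside,
`ṙ` never vanishes and the particle never comes back (`no_return`). Hence a particle that starts
inside the ring and is inside it at time `t` has stayed inside on `[0, t]`, and its momentum has
grown at most linearly, with a constant independent of `R`. Since the particles starting outside a
large ring carry small mass, the momenta above bounded sets of positions are uniformly tight
(`exists_momentum_tail_le`), the forces converge locally uniformly
(`eventually_norm_integral_conv_sub_le`), and the weak formulation passes to the limit
(`tendsto_weak_form`, `truncated_flow_weak_form`).
-/

open MeasureTheory Set Filter Topology
open scoped ENNReal RealInnerProductSpace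

noncomputable section

/-- `∇(Φ + W⋆ν)(q) = ∇Φ(q) + ∫ ∇W(q − q') dν(p',q')`. -/
def forceF {d : ℕ} (Φ W : Euc d → ℝ) (ν : Measure (Euc d × Euc d)) (q : Euc d) : Euc d :=
  gradient Φ q + ∫ y, gradient W (q - y.2) ∂ν

/-- The Euclidean norm of a phase-space point `x = (p,q)`. -/
def phNorm {d : ℕ} (x : Euc d × Euc d) : ℝ :=
  Real.sqrt (‖x.1‖ ^ 2 + ‖x.2‖ ^ 2)

/-! ### Vague compactness -/

/-- The embedding of a normed space into its closed unit ball, given by the homeomorphism onto the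
open unit ball; in finite dimension its target is a compactification of the space. -/
def toUnitBall {E : Type*} [NormedAddCommGroup E] [NormedSpace ℝ E] (x : E) :
    Metric.closedBall (0 : E) 1 :=
  ⟨Homeomorph.unitBall x, Metric.ball_subset_closedBall (Homeomorph.unitBall x).2⟩

theorem isOpenEmbedding_toUnitBall {E : Type*} [NormedAddCommGroup E] [NormedSpace ℝ E] :
    IsOpenEmbedding (toUnitBall (E := E)) := by
  have h1 : IsOpenEmbedding (fun x : E => ((Homeomorph.unitBall x : Metric.ball (0:E) 1) : E)) :=
    (Metric.isOpen_ball.isOpenEmbedding_subtypeVal).comp Homeomorph.unitBall.isOpenEmbedding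
  have hcont : Continuous (toUnitBall (E := E)) := h1.continuous.subtype_mk _
  refine ⟨IsEmbedding.of_comp hcont continuous_subtype_val h1.isEmbedding, ?_⟩
  have : range (toUnitBall (E := E)) = Subtype.val ⁻¹' Metric.ball (0:E) 1 := by
    ext k
    constructor
    · rintro ⟨x, rfl⟩
      exact (Homeomorph.unitBall x).2
    · intro hk
      refine ⟨Homeomorph.unitBall.symm ⟨k, hk⟩, Subtype.ext ?_⟩
      simp [toUnitBall]
  rw [this]
  exact Metric.isOpen_ball.preimage continuous_subtype_val

/-- A continuous compactly supported function on `E` extends by zero to the closed unit ball, and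
integrals of the extension do not see the mass that lies on the unit sphere. -/
theorem exists_extension_toUnitBall {E : Type*} [NormedAddCommGroup E] [NormedSpace ℝ E]
    [FiniteDimensional ℝ E] [MeasurableSpace E] [BorelSpace E]
    (ψ : E → ℝ) (hψ : Continuous ψ) (hc : HasCompactSupport ψ) :
    ∃ g : Metric.closedBall (0 : E) 1 → ℝ, Continuous g ∧ (∀ x, g (toUnitBall x) = ψ x) ∧
      ∀ ρ : Measure (Metric.closedBall (0 : E) 1),
        ∫ x, ψ x ∂(ρ.comap toUnitBall) = ∫ k, g k ∂ρ := by
  let f : Metric.ball (0:E) 1 → ℝ := fun y => ψ (Homeomorph.unitBall.symm y)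
  have hf : Continuous f := by fun_prop
  have hfc : HasCompactSupport f := hc.comp_homeomorph Homeomorph.unitBall.symm
  have hext := hfc.continuous_extend_zero Metric.isOpen_ball hf
  have hg : ∀ x : E, Function.extend Subtype.val f 0 ((toUnitBall x : Metric.closedBall (0:E) 1) : E)
      = ψ x := by
    intro x
    have := Subtype.val_injective.extend_apply f 0 (Homeomorph.unitBall x)
    simp [toUnitBall, f]
  refine ⟨fun k => Function.extend Subtype.val f 0 (k : E), hext.comp continuous_subtype_val, hg, ?_⟩
  intro ρ
  have hj : MeasurableEmbedding (toUnitBall (E := E)) :=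
    isOpenEmbedding_toUnitBall.measurableEmbedding
  have h1 : ∫ x, ψ x ∂(ρ.comap toUnitBall) =
      ∫ k, Function.extend Subtype.val f 0 (k : E) ∂((ρ.comap toUnitBall).map toUnitBall) := by
    rw [hj.integral_map]
    simp only [hg]
  rw [h1, hj.map_comap, setIntegral_eq_integral_of_forall_compl_eq_zero]
  intro k hk
  rw [Function.extend_apply']
  · rfl
  rintro ⟨a, ha⟩
  apply hk
  refine ⟨Homeomorph.unitBall.symm a, Subtype.ext ?_⟩
  simp [toUnitBall, ha]

/-- Vague compactness for time-dependent probability measures with a Lipschitz bound in time. The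
measures are pushed forward to the compact space of probability measures on the closed unit ball;
a subsequence converges at all rational times, and the Lipschitz bound extends the convergence to
all real times. Mass may be lost on the unit sphere, whence only `μ t univ ≤ 1`. -/
theorem exists_subseq_vague {E : Type*} [NormedAddCommGroup E] [NormedSpace ℝ E]
    [FiniteDimensional ℝ E] [MeasurableSpace E] [BorelSpace E]
    (ν : ℕ → ℝ → Measure E) (hν : ∀ n t, IsProbabilityMeasure (ν n t))
    (hLip : ∀ ψ : E → ℝ, ContDiff ℝ (⊤ : ℕ∞) ψ → HasCompactSupport ψ →
      ∃ C : ℝ, ∀ n s t, |∫ x, ψ x ∂(ν n t) - ∫ x, ψ x ∂(ν n s)| ≤ C * |t - s|) :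
    ∃ σ : ℕ → ℕ, StrictMono σ ∧ ∃ μ : ℝ → Measure E, (∀ t, μ t univ ≤ 1) ∧
      ∀ ψ : E → ℝ, Continuous ψ → HasCompactSupport ψ → ∀ t,
        Tendsto (fun k => ∫ x, ψ x ∂(ν (σ k) t)) atTop (𝓝 (∫ x, ψ x ∂(μ t))) := by
  have hj : MeasurableEmbedding (toUnitBall (E := E)) :=
    isOpenEmbedding_toUnitBall.measurableEmbedding
  let P : ℕ → ℝ → ProbabilityMeasure (Metric.closedBall (0:E) 1) := fun n t =>
    ⟨(ν n t).map toUnitBall, Measure.isProbabilityMeasure_map hj.measurable.aemeasurable⟩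
  obtain ⟨a, σ, hσ, ha⟩ := CompactSpace.tendsto_subseq
    (fun (n : ℕ) (s : ℚ) => P n (s : ℝ))
  rw [tendsto_pi_nhds] at ha
  -- an ultrafilter limit defines the limit measure at all real times at once
  let U : Ultrafilter ℕ := hyperfilter ℕ
  have hU : (U : Filter ℕ) ≤ atTop := Nat.hyperfilter_le_atTop
  let m : ℝ → ProbabilityMeasure (Metric.closedBall (0:E) 1) := fun t =>
    (U.map (fun k => P (σ k) t)).lim
  have hm : ∀ t, Tendsto (fun k => P (σ k) t) U (𝓝 (m t)) := fun t =>
    (U.map (fun k => P (σ k) t)).le_nhds_lim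
  have hPint : ∀ n t (g : Metric.closedBall (0:E) 1 → ℝ),
      ∫ k, g k ∂(P n t : Measure (Metric.closedBall (0:E) 1)) = ∫ x, g (toUnitBall x) ∂(ν n t) := by
    intro n t g
    exact hj.integral_map g
  let μ : ℝ → Measure E := fun t =>
    (m t : Measure (Metric.closedBall (0:E) 1)).comap toUnitBall
  have hμ : ∀ t, μ t univ ≤ 1 := by
    intro t
    simp only [μ]
    rw [hj.comap_apply]
    exact prob_le_one
  have hμfin : ∀ t, IsFiniteMeasure (μ t) := fun t => ⟨(hμ t).trans_lt ENNReal.one_lt_top⟩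
  have hlimU : ∀ ψ : E → ℝ, Continuous ψ → HasCompactSupport ψ → ∀ t,
      Tendsto (fun k => ∫ x, ψ x ∂(ν (σ k) t)) U (𝓝 (∫ x, ψ x ∂(μ t))) := by
    intro ψ hψ hψc t
    obtain ⟨g, hg, hgψ, hgi⟩ := exists_extension_toUnitBall ψ hψ hψc
    have h := (ProbabilityMeasure.tendsto_iff_forall_integral_tendsto.1 (hm t))
      (BoundedContinuousFunction.mkOfCompact ⟨g, hg⟩)
    simp only [BoundedContinuousFunction.mkOfCompact_apply, ContinuousMap.coe_mk, hPint, hgψ] at h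
    simp only [μ]
    rwa [hgi]
  have hlimQ : ∀ ψ : E → ℝ, Continuous ψ → HasCompactSupport ψ → ∀ s : ℚ,
      Tendsto (fun k => ∫ x, ψ x ∂(ν (σ k) s)) atTop (𝓝 (∫ x, ψ x ∂(μ s))) := by
    intro ψ hψ hψc s
    obtain ⟨g, hg, hgψ, hgi⟩ := exists_extension_toUnitBall ψ hψ hψc
    have h := (ProbabilityMeasure.tendsto_iff_forall_integral_tendsto.1 (ha s))
      (BoundedContinuousFunction.mkOfCompact ⟨g, hg⟩)
    simp only [BoundedContinuousFunction.mkOfCompact_apply, ContinuousMap.coe_mk,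
      Function.comp_apply, hPint, hgψ] at h
    have := tendsto_nhds_unique (h.mono_left hU) (hlimU ψ hψ hψc s)
    rwa [← this]
  have hsmooth : ∀ ψ : E → ℝ, ContDiff ℝ (⊤ : ℕ∞) ψ → HasCompactSupport ψ → ∀ t,
      Tendsto (fun k => ∫ x, ψ x ∂(ν (σ k) t)) atTop (𝓝 (∫ x, ψ x ∂(μ t))) := by
    intro ψ hψ hψc t
    obtain ⟨C, hC⟩ := hLip ψ hψ hψc
    have hlip : ∀ s, |∫ x, ψ x ∂(μ t) - ∫ x, ψ x ∂(μ s)| ≤ C * |t - s| := by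
      intro s
      have h1 := hlimU ψ hψ.continuous hψc t
      have h2 := hlimU ψ hψ.continuous hψc s
      exact le_of_tendsto (h1.sub h2).abs (Eventually.of_forall fun k => hC (σ k) s t)
    rw [Metric.tendsto_nhds]
    intro ε hε
    have hpos : (0:ℝ) < ε / (3 * (|C| + 1)) := by positivity
    obtain ⟨s, hs1, hs2⟩ := exists_rat_btwn (lt_add_of_pos_right t hpos)
    have hts : C * |t - s| < ε / 3 := by
      have h3 : |t - s| < ε / (3 * (|C| + 1)) := by
        rw [abs_sub_lt_iff]; constructor <;> linarith
      calc C * |t - s| ≤ (|C| + 1) * |t - s| := by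
            gcongr; linarith [le_abs_self C]
        _ < (|C| + 1) * (ε / (3 * (|C| + 1))) := by gcongr
        _ = ε / 3 := by field_simp
    have h4 := (Metric.tendsto_nhds.1 (hlimQ ψ hψ.continuous hψc s)) (ε / 3) (by positivity)
    filter_upwards [h4] with k hk
    rw [Real.dist_eq] at hk ⊢
    have h5 := hC (σ k) s t
    have h6 := hlip s
    rw [abs_lt] at hk ⊢
    rw [abs_le] at h5 h6
    constructor <;> linarith
  -- uniform approximation by smooth functions covers merely continuous test functions
  refine ⟨σ, hσ, μ, hμ, ?_⟩
  intro ψ hψ hψc t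
  rw [Metric.tendsto_nhds]
  intro ε hε
  obtain ⟨g, hg, hgd, hgs⟩ := hψ.exists_contDiff_approx ⊤ (ε := fun _ => ε / 3)
    continuous_const (fun _ => by positivity)
  have hgc : HasCompactSupport g := hψc.mono hgs
  have happ : ∀ ρ : Measure E, IsFiniteMeasure ρ → ρ univ ≤ 1 →
      |∫ x, g x ∂ρ - ∫ x, ψ x ∂ρ| ≤ ε / 3 := by
    intro ρ hρ hρ1
    rw [← integral_sub (hg.continuous.integrable_of_hasCompactSupport hgc)
      (hψ.integrable_of_hasCompactSupport hψc), ← Real.norm_eq_abs]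
    have := norm_integral_le_of_norm_le_const (μ := ρ) (f := fun x => g x - ψ x) (C := ε / 3)
      (Eventually.of_forall fun x => (hgd x).le)
    refine this.trans ?_
    have h7 : ρ.real univ ≤ 1 := ENNReal.toReal_le_of_le_ofReal zero_le_one (by simpa using hρ1)
    nlinarith
  filter_upwards [(Metric.tendsto_nhds.1 (hsmooth g hg hgc t)) (ε / 3) (by positivity)] with k hk
  have h1 := happ (ν (σ k) t) inferInstance prob_le_one
  have h2 := happ (μ t) (hμfin t) (hμ t)
  rw [Real.dist_eq, abs_lt] at *
  rw [abs_le] at h1 h2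
  constructor <;> linarith

/-! ### Mean-field flows -/

theorem abs_integral_exp_abs_le {l : ℝ} (hl : 0 < l) (t : ℝ) :
    |∫ s in (0:ℝ)..t, Real.exp (l * |s|)| ≤ Real.exp (l * |t|) / l := by
  have key : ∀ t : ℝ, 0 ≤ t → |∫ s in (0:ℝ)..t, Real.exp (l * |s|)| ≤ Real.exp (l * |t|) / l := by
    intro t ht
    have h1 : ∫ s in (0:ℝ)..t, Real.exp (l * |s|) = ∫ s in (0:ℝ)..t, Real.exp (l * s) := by
      apply intervalIntegral.integral_congr
      intro s hs
      rw [uIcc_of_le ht] at hs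
      simp only [abs_of_nonneg hs.1]
    have h2 : ∫ s in (0:ℝ)..t, Real.exp (l * s) = (Real.exp (l * t) - 1) / l := by
      rw [intervalIntegral.integral_comp_mul_left (fun s => Real.exp s) hl.ne', integral_exp]
      simp [div_eq_inv_mul]
    rw [h1, h2, abs_of_nonneg ht, abs_of_nonneg]
    · gcongr; linarith
    · apply div_nonneg _ hl.le
      have := Real.add_one_le_exp (l * t)
      nlinarith [mul_nonneg hl.le ht]
  rcases le_total 0 t with ht | ht
  · exact key t ht
  · have := key (-t) (by linarith)
    have h3 : ∫ s in (0:ℝ)..(-t), Real.exp (l * |s|) = - ∫ s in (0:ℝ)..t, Real.exp (l * |s|) := by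
      rw [← intervalIntegral.integral_symm,
        ← neg_zero, ← intervalIntegral.integral_comp_neg (fun s => Real.exp (l * |s|))]
      simp
    rwa [h3, abs_neg, abs_neg] at this

/-- Global solvability of an ordinary differential equation `∂ₜ X = 𝒱 X` in a space of maps
`E → E`, where the field `𝒱` may depend on the whole map. The solution is the fixed point of the
Duhamel operator in the space of maps bounded by a multiple of the weight
`exp (2 K |t|) * (1 + ‖x‖)`, for which this operator is a contraction of ratio `1 / 2`. -/
theorem exists_global_flow {E : Type*} [NormedAddCommGroup E] [NormedSpace ℝ E] [CompleteSpace E]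
    (𝒱 : (E → E) → E → E) (C₀ K : ℝ) (hC₀ : 0 ≤ C₀) (hK : 0 < K)
    (hcont : ∀ Y : ℝ → E → E, Continuous (fun z : ℝ × E => Y z.1 z.2) →
      Continuous (fun z : ℝ × E => 𝒱 (Y z.1) z.2))
    (hgrowth : ∀ Y x, ‖𝒱 Y x‖ ≤ C₀ + ‖Y x‖)
    (hlip : ∀ Y Y' : E → E, Continuous Y → Continuous Y' → ∀ D : ℝ, 0 ≤ D →
      (∀ x, ‖Y x - Y' x‖ ≤ D * (1 + ‖x‖)) → ∀ x, ‖𝒱 Y x - 𝒱 Y' x‖ ≤ K * (D * (1 + ‖x‖))) :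
    ∃ X : ℝ → E → E, Continuous (fun z : ℝ × E => X z.1 z.2) ∧ (∀ x, X 0 x = x) ∧
      ∀ t x, HasDerivAt (fun s => X s x) (𝒱 (X t) x) t := by
  set l : ℝ := 2 * K with hl
  have hlpos : 0 < l := by positivity
  let w : ℝ × E → ℝ := fun z => Real.exp (l * |z.1|) * (1 + ‖z.2‖)
  have hwpos : ∀ z, 0 < w z := fun z => by positivity
  have hwcont : Continuous w := by fun_prop
  -- unknowns are written as `w • Z` with `Z` bounded and continuous
  let Y : BoundedContinuousFunction (ℝ × E) E → ℝ → E → E := fun Z t x => w (t, x) • Z (t, x)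
  have hYc : ∀ Z, Continuous (fun z : ℝ × E => Y Z z.1 z.2) := fun Z => by
    simp only [Y]; fun_prop
  have hYt : ∀ Z t, Continuous (Y Z t) := fun Z t => by
    have := (hYc Z).comp (Continuous.prodMk_right t)
    exact this
  have hVc : ∀ Z, Continuous (fun z : ℝ × E => 𝒱 (Y Z z.1) z.2) := fun Z => hcont _ (hYc Z)
  have hVx : ∀ Z x, Continuous (fun s : ℝ => 𝒱 (Y Z s) x) := fun Z x =>
    (hVc Z).comp (Continuous.prodMk_left x)
  let J : BoundedContinuousFunction (ℝ × E) E → ℝ × E → E := fun Z z =>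
    z.2 + ∫ s in (0:ℝ)..z.1, 𝒱 (Y Z s) z.2
  have hJc : ∀ Z, Continuous (J Z) := by
    intro Z
    refine continuous_snd.add ?_
    apply intervalIntegral.continuous_parametric_intervalIntegral_of_continuous
      (f := fun (z : ℝ × E) s => 𝒱 (Y Z s) z.2) _ continuous_fst
    exact (hVc Z).comp (f := fun p : (ℝ × E) × ℝ => (p.2, p.1.2)) (by fun_prop)
  have hexpint : ∀ c t : ℝ, IntervalIntegrable (fun s => c * Real.exp (l * |s|)) volume 0 t :=
    fun c t => (by fun_prop : Continuous fun s : ℝ => c * Real.exp (l * |s|)).intervalIntegrable _ _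
  have hintle : ∀ (f : ℝ → E) (c t : ℝ), 0 ≤ c → (∀ s, ‖f s‖ ≤ c * Real.exp (l * |s|)) →
      ‖∫ s in (0:ℝ)..t, f s‖ ≤ c * (Real.exp (l * |t|) / l) := by
    intro f c t hc hf
    refine (intervalIntegral.norm_integral_le_abs_of_norm_le
      (Eventually.of_forall hf) (hexpint c t)).trans ?_
    rw [intervalIntegral.integral_const_mul, abs_mul, abs_of_nonneg hc]
    gcongr
    exact abs_integral_exp_abs_le hlpos t
  have hone : ∀ s : ℝ, 1 ≤ Real.exp (l * |s|) := fun s => Real.one_le_exp (by positivity)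
  have hJb : ∀ Z z, ‖(w z)⁻¹ • J Z z‖ ≤ 1 + (C₀ + ‖Z‖) / l := by
    rintro Z ⟨t, x⟩
    rw [norm_smul, norm_inv, Real.norm_eq_abs, abs_of_pos (hwpos _), inv_mul_le_iff₀ (hwpos _)]
    have h1 : ‖∫ s in (0:ℝ)..t, 𝒱 (Y Z s) x‖ ≤
        ((C₀ + ‖Z‖) * (1 + ‖x‖)) * (Real.exp (l * |t|) / l) := by
      apply hintle _ _ _ (by positivity)
      intro s
      refine (hgrowth _ _).trans ?_
      have h2 : ‖Y Z s x‖ ≤ Real.exp (l * |s|) * (1 + ‖x‖) * ‖Z‖ := by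
        simp only [Y, w]
        rw [norm_smul, Real.norm_eq_abs, abs_of_pos (hwpos (s, x))]
        gcongr
        exact Z.norm_coe_le_norm _
      have h3 : C₀ ≤ Real.exp (l * |s|) * (1 + ‖x‖) * C₀ := by
        apply le_mul_of_one_le_left hC₀
        exact one_le_mul_of_one_le_of_one_le (hone s) (by linarith [norm_nonneg x])
      nlinarith
    have h4 : ‖x‖ ≤ w (t, x) := by
      simp only [w]
      nlinarith [hone t, norm_nonneg x]
    calc ‖J Z (t, x)‖ ≤ ‖x‖ + ‖∫ s in (0:ℝ)..t, 𝒱 (Y Z s) x‖ := norm_add_le _ _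
      _ ≤ w (t, x) + ((C₀ + ‖Z‖) * (1 + ‖x‖)) * (Real.exp (l * |t|) / l) := add_le_add h4 h1
      _ = w (t, x) * (1 + (C₀ + ‖Z‖) / l) := by simp only [w]; ring
  let Γ : BoundedContinuousFunction (ℝ × E) E → BoundedContinuousFunction (ℝ × E) E := fun Z =>
    BoundedContinuousFunction.ofNormedAddCommGroup (fun z => (w z)⁻¹ • J Z z)
      ((hwcont.inv₀ fun z => (hwpos z).ne').smul (hJc Z)) _ (hJb Z)
  have hΓ : ContractingWith (1 / 2) Γ := by
    refine ⟨by
      rw [← NNReal.coe_lt_coe]; norm_num, LipschitzWith.of_dist_le_mul fun Z Z' => ?_⟩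
    rw [BoundedContinuousFunction.dist_le (by positivity)]
    rintro ⟨t, x⟩
    simp only [Γ, BoundedContinuousFunction.coe_ofNormedAddCommGroup]
    rw [dist_eq_norm, ← smul_sub, norm_smul, norm_inv, Real.norm_eq_abs, abs_of_pos (hwpos _),
      inv_mul_le_iff₀ (hwpos _)]
    have h1 : J Z (t, x) - J Z' (t, x) = ∫ s in (0:ℝ)..t, (𝒱 (Y Z s) x - 𝒱 (Y Z' s) x) := by
      rw [intervalIntegral.integral_sub ((hVx Z x).intervalIntegrable _ _)
        ((hVx Z' x).intervalIntegrable _ _)]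
      simp only [J]; abel
    rw [h1]
    have h2 := hintle (fun s => 𝒱 (Y Z s) x - 𝒱 (Y Z' s) x) (K * (dist Z Z' * (1 + ‖x‖))) t
      (by positivity) (by
        intro s
        refine (hlip _ _ (hYt Z s) (hYt Z' s) (dist Z Z' * Real.exp (l * |s|)) (by positivity)
          ?_ x).trans (le_of_eq (by ring))
        intro y
        simp only [Y]
        rw [← smul_sub, norm_smul, Real.norm_eq_abs, abs_of_pos (hwpos _), ← dist_eq_norm]
        calc w (s, y) * dist (Z (s, y)) (Z' (s, y)) ≤ w (s, y) * dist Z Z' := by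
              gcongr
              exact BoundedContinuousFunction.dist_coe_le_dist _
          _ = _ := by simp only [w]; ring)
    refine h2.trans (le_of_eq ?_)
    simp only [w, hl]
    push_cast
    field_simp
  let Z := hΓ.fixedPoint
  have hZ : Γ Z = Z := hΓ.fixedPoint_isFixedPt
  have hYJ : ∀ t x, Y Z t x = J Z (t, x) := by
    intro t x
    have h1 : Z (t, x) = (w (t, x))⁻¹ • J Z (t, x) := by
      conv_lhs => rw [← hZ]
      rfl
    simp only [Y]
    rw [h1, smul_inv_smul₀ (hwpos _).ne']
  refine ⟨Y Z, hYc Z, fun x => by rw [hYJ]; simp [J], fun t x => ?_⟩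
  have h1 : (fun s => Y Z s x) = fun s => x + ∫ r in (0:ℝ)..s, 𝒱 (Y Z r) x := by
    funext s; exact hYJ s x
  rw [h1]
  exact ((hVx Z x).integral_hasStrictDerivAt 0 t).hasDerivAt.const_add x

/-- Global flow of the mean-field Newton system with bounded Lipschitz external force `-g` and
interaction force `-k`, when the initial law `μ₀` has a finite first moment. -/
theorem exists_meanField_flow {F : Type*} [NormedAddCommGroup F] [NormedSpace ℝ F]
    [FiniteDimensional ℝ F] [MeasurableSpace F] [BorelSpace F]
    (μ₀ : Measure (F × F)) [IsProbabilityMeasure μ₀] (hμ₀ : Integrable (fun x => ‖x‖) μ₀)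
    (g k : F → F) (G B Lg Lk : ℝ)
    (hG : ∀ q, ‖g q‖ ≤ G) (hB : ∀ q, ‖k q‖ ≤ B)
    (hgL : ∀ q q', ‖g q - g q'‖ ≤ Lg * ‖q - q'‖) (hkL : ∀ q q', ‖k q - k q'‖ ≤ Lk * ‖q - q'‖)
    (hLg : 0 ≤ Lg) (hLk : 0 ≤ Lk) :
    ∃ X : ℝ → F × F → F × F, Continuous (fun z : ℝ × (F × F) => X z.1 z.2) ∧ (∀ x, X 0 x = x) ∧
      ∀ t x, HasDerivAt (fun s => X s x)
        (- g (X t x).2 - ∫ y, k ((X t x).2 - (X t y).2) ∂μ₀, (X t x).1) t := by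
  have hgc : Continuous g :=
    (LipschitzWith.of_dist_le_mul (K := Lg.toNNReal) fun x y => by
      rw [dist_eq_norm, dist_eq_norm, Real.coe_toNNReal _ hLg]; exact hgL x y).continuous
  have hkc : Continuous k :=
    (LipschitzWith.of_dist_le_mul (K := Lk.toNNReal) fun x y => by
      rw [dist_eq_norm, dist_eq_norm, Real.coe_toNNReal _ hLk]; exact hkL x y).continuous
  have hG0 : 0 ≤ G := (norm_nonneg _).trans (hG 0)
  have hB0 : 0 ≤ B := (norm_nonneg _).trans (hB 0)
  have hw : Integrable (fun x : F × F => 1 + ‖x‖) μ₀ := (integrable_const _).add hμ₀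
  set M : ℝ := ∫ x, (1 + ‖x‖) ∂μ₀ with hM
  have hM0 : 0 ≤ M := integral_nonneg fun x => by positivity
  have hI : ∀ (a : F) (Y : F × F → F × F), ‖∫ y, k (a - (Y y).2) ∂μ₀‖ ≤ B := by
    intro a Y
    have := norm_integral_le_of_norm_le_const (μ := μ₀) (f := fun y => k (a - (Y y).2)) (C := B)
      (Eventually.of_forall fun y => hB _)
    simpa using this
  have hint : ∀ (a : F) (Y : F × F → F × F), Continuous Y →
      Integrable (fun y => k (a - (Y y).2)) μ₀ := by
    intro a Y hY
    apply Integrable.of_bound (C := B)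
    · exact (by fun_prop : Continuous fun y => k (a - (Y y).2)).aestronglyMeasurable
    · exact Eventually.of_forall fun y => hB _
  refine exists_global_flow
    (fun Y x => (- g (Y x).2 - ∫ y, k ((Y x).2 - (Y y).2) ∂μ₀, (Y x).1)) (G + B)
    (1 + Lg + Lk * (1 + M)) (by positivity) (by positivity) ?_ ?_ ?_
  · intro Y hY
    have hc : Continuous fun z : ℝ × (F × F) =>
        ∫ y, k ((Y z.1 z.2).2 - (Y z.1 y).2) ∂μ₀ := by
      apply continuous_of_dominated (bound := fun _ => B)
      · intro z
        have h1 : Continuous fun y => Y z.1 y := hY.comp (Continuous.prodMk_right z.1)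
        exact (by fun_prop : Continuous fun y =>
          k ((Y z.1 z.2).2 - (Y z.1 y).2)).aestronglyMeasurable
      · exact fun z => Eventually.of_forall fun y => hB _
      · exact integrable_const _
      · refine Eventually.of_forall fun y => ?_
        have h1 : Continuous fun z : ℝ × (F × F) => Y z.1 y :=
          hY.comp (f := fun z : ℝ × (F × F) => (z.1, y)) (by fun_prop)
        fun_prop
    fun_prop
  · intro Y x
    rw [Prod.norm_def]
    apply max_le
    · calc ‖- g (Y x).2 - ∫ y, k ((Y x).2 - (Y y).2) ∂μ₀‖ ≤ ‖- g (Y x).2‖ + _ := norm_sub_le _ _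
        _ ≤ G + B := by rw [norm_neg]; exact add_le_add (hG _) (hI _ _)
        _ ≤ _ := by linarith [norm_nonneg (Y x)]
    · calc ‖(Y x).1‖ ≤ ‖Y x‖ := norm_fst_le _
        _ ≤ _ := by linarith
  · intro Y Y' hY hY' D hD hYY x
    have hx1 : (1:ℝ) ≤ 1 + ‖x‖ := by linarith [norm_nonneg x]
    have h2 : ∀ y, ‖(Y y).2 - (Y' y).2‖ ≤ D * (1 + ‖y‖) := fun y =>
      (norm_snd_le (Y y - Y' y)).trans (hYY y)
    have hIle : ‖∫ y, k ((Y x).2 - (Y y).2) ∂μ₀ - ∫ y, k ((Y' x).2 - (Y' y).2) ∂μ₀‖ ≤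
        Lk * (D * (1 + ‖x‖) + D * M) := by
      rw [← integral_sub (hint _ _ hY) (hint _ _ hY')]
      have hi : Integrable (fun y : F × F => Lk * (D * (1 + ‖x‖) + D * (1 + ‖y‖))) μ₀ :=
        ((integrable_const _).add (hw.const_mul _)).const_mul _
      refine (norm_integral_le_of_norm_le hi (Eventually.of_forall fun y => ?_)).trans
        (le_of_eq ?_)
      · refine (hkL _ _).trans ?_
        gcongr
        calc ‖(Y x).2 - (Y y).2 - ((Y' x).2 - (Y' y).2)‖
            = ‖((Y x).2 - (Y' x).2) - ((Y y).2 - (Y' y).2)‖ := by congr 1; abel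
          _ ≤ _ := (norm_sub_le _ _).trans (add_le_add (h2 x) (h2 y))
      · rw [integral_const_mul, integral_add (integrable_const _) (hw.const_mul _),
          integral_const, integral_const_mul, ← hM]
        simp
    have hDx : 0 ≤ D * (1 + ‖x‖) := by positivity
    rw [Prod.norm_def]
    apply max_le
    · have h3 : ‖g (Y x).2 - g (Y' x).2‖ ≤ Lg * (D * (1 + ‖x‖)) :=
        (hgL _ _).trans (by gcongr; exact h2 x)
      have h4 : Lk * (D * M) ≤ Lk * (D * M * (1 + ‖x‖)) := by
        apply mul_le_mul_of_nonneg_left _ hLk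
        exact le_mul_of_one_le_right (by positivity) hx1
      calc ‖(- g (Y x).2 - ∫ y, k ((Y x).2 - (Y y).2) ∂μ₀) -
            (- g (Y' x).2 - ∫ y, k ((Y' x).2 - (Y' y).2) ∂μ₀)‖
          = ‖-(g (Y x).2 - g (Y' x).2) - (∫ y, k ((Y x).2 - (Y y).2) ∂μ₀ -
              ∫ y, k ((Y' x).2 - (Y' y).2) ∂μ₀)‖ := by congr 1; abel
        _ ≤ Lg * (D * (1 + ‖x‖)) + Lk * (D * (1 + ‖x‖) + D * M) := by
            refine (norm_sub_le _ _).trans (add_le_add ?_ hIle)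
            rwa [norm_neg]
        _ ≤ _ := by nlinarith
    · calc ‖(Y x).1 - (Y' x).1‖ ≤ ‖Y x - Y' x‖ := norm_fst_le (Y x - Y' x)
        _ ≤ D * (1 + ‖x‖) := hYY x
        _ ≤ _ := by
            apply le_mul_of_one_le_left hDx
            nlinarith [mul_nonneg hLk hM0]

/-! ### Rings of no return -/

theorem deriv_nonpos_of_eventually_le {f : ℝ → ℝ} {f' x : ℝ} (hf : HasDerivAt f f' x)
    (hle : ∀ᶠ y in 𝓝[>] x, f y ≤ f x) : f' ≤ 0 := by
  have h1 : Tendsto (slope f x) (𝓝[>] x) (𝓝 f') :=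
    (hasDerivAt_iff_tendsto_slope.1 hf).mono_left
      (nhdsWithin_mono _ fun y hy => ne_of_gt hy)
  refine le_of_tendsto h1 ?_
  filter_upwards [hle, self_mem_nhdsWithin] with y hy hxy
  rw [slope_def_field]
  exact div_nonpos_of_nonpos_of_nonneg (by linarith) (by have : x < y := hxy; linarith)

/-- One-dimensional no-return principle: `r'' > -v'(r)` for `r ≥ ρ` and `v < v ρ` beyond `ρ`. After
an outward crossing of `ρ` the energy `σ² / 2 + v r` increases as long as the speed `σ = r'` is
positive, so at a first zero of `σ` it would be at least `v ρ`, whereas it equals `v r < v ρ`. -/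
theorem no_return_one_dim {r σ a v v' : ℝ → ℝ} {ρ s t : ℝ} (hrc : Continuous r)
    (hr : ∀ τ, ρ ≤ r τ → HasDerivAt r (σ τ) τ)
    (hσ : ∀ τ, ρ ≤ r τ → HasDerivAt σ (a τ) τ)
    (ha : ∀ τ, ρ ≤ r τ → - v' (r τ) < a τ)
    (hv : ∀ x, HasDerivAt v (v' x) x) (hvlt : ∀ x, ρ < x → v x < v ρ)
    (h0 : r 0 ≤ ρ) (ht : r t ≤ ρ) (hs0 : 0 ≤ s) (hst : s ≤ t) : r s ≤ ρ := by
  by_contra! hsρ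
  have hv'ρ : v' ρ ≤ 0 := deriv_nonpos_of_eventually_le (hv ρ)
    (by filter_upwards [self_mem_nhdsWithin] with y hy using (hvlt y hy).le)
  -- the last time before `s` in the ball
  obtain ⟨s₀, ⟨⟨hs₀0, hs₀s⟩, hs₀r⟩, hs₀max⟩ : ∃ x, IsGreatest (Icc 0 s ∩ {τ | r τ ≤ ρ}) x := by
    apply IsCompact.exists_isGreatest
    · exact isCompact_Icc.inter_right (isClosed_le hrc continuous_const)
    · exact ⟨0, ⟨le_rfl, hs0⟩, h0⟩
  have hs₀lt : s₀ < s := lt_of_le_of_ne hs₀s (by rintro rfl; exact absurd hsρ (not_lt.2 hs₀r))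
  have hr1 : ∀ τ, s₀ < τ → τ ≤ s → ρ < r τ := by
    intro τ h1 h2
    by_contra! h3
    exact absurd (hs₀max ⟨⟨hs₀0.trans h1.le, h2⟩, h3⟩) (not_le.2 h1)
  have hs₀eq : r s₀ = ρ := by
    obtain ⟨τ, hτ, hτr⟩ := intermediate_value_Icc hs₀s hrc.continuousOn ⟨hs₀r, hsρ.le⟩
    have : τ ≤ s₀ := hs₀max ⟨⟨hs₀0.trans hτ.1, hτ.2⟩, hτr.le⟩
    rwa [le_antisymm this hτ.1] at hτr
  -- the first time after `s` in the ball
  obtain ⟨t₀, ⟨⟨ht₀s, ht₀t⟩, ht₀r⟩, ht₀min⟩ : ∃ x, IsLeast (Icc s t ∩ {τ | r τ ≤ ρ}) x := by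
    apply IsCompact.exists_isLeast
    · exact isCompact_Icc.inter_right (isClosed_le hrc continuous_const)
    · exact ⟨t, ⟨hst, le_rfl⟩, ht⟩
  have ht₀lt : s < t₀ := lt_of_le_of_ne ht₀s (by rintro rfl; exact absurd hsρ (not_lt.2 ht₀r))
  have hr2 : ∀ τ, s₀ < τ → τ < t₀ → ρ < r τ := by
    intro τ h1 h2
    rcases le_total τ s with h | h
    · exact hr1 τ h1 h
    · by_contra! h3
      exact absurd (ht₀min ⟨⟨h, h2.le.trans ht₀t⟩, h3⟩) (not_le.2 h2)
  have hr3 : ∀ τ, s₀ ≤ τ → τ < t₀ → ρ ≤ r τ := by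
    intro τ h1 h2
    rcases h1.eq_or_lt with h | h
    · rw [← h, hs₀eq]
    · exact (hr2 τ h h2).le
  obtain ⟨c, hc, hcσ⟩ : ∃ c ∈ Ioo s t₀, σ c = (r t₀ - r s) / (t₀ - s) :=
    exists_hasDerivAt_eq_slope r σ ht₀lt hrc.continuousOn
      fun x hx => hr x (hr2 x (hs₀lt.trans hx.1) hx.2).le
  have hcneg : σ c < 0 := by
    rw [hcσ]
    have h2 : r t₀ ≤ ρ := ht₀r
    exact div_neg_of_neg_of_pos (by linarith) (by linarith)
  have hσ₀ : 0 ≤ σ s₀ := by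
    have := deriv_nonpos_of_eventually_le (hr s₀ hs₀eq.ge).neg (by
      filter_upwards [Ioo_mem_nhdsGT hs₀lt] with y hy
      have := hr1 y hy.1 hy.2.le
      simp only [Pi.neg_apply]
      linarith)
    linarith
  -- outward motion right after `s₀`: if the radial speed vanishes at `s₀`, the radial
  -- acceleration is positive there
  have hpos : ∀ᶠ y in 𝓝[>] s₀, 0 < σ y := by
    have hd := hσ s₀ hs₀eq.ge
    rcases hσ₀.eq_or_lt with h | h
    · have ha0 : 0 < a s₀ := by
        have := ha s₀ hs₀eq.ge
        rw [hs₀eq] at this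
        linarith
      have h1 : Tendsto (slope σ s₀) (𝓝[>] s₀) (𝓝 (a s₀)) :=
        (hasDerivAt_iff_tendsto_slope.1 hd).mono_left
          (nhdsWithin_mono _ fun y hy => ne_of_gt hy)
      filter_upwards [h1.eventually_const_lt ha0, self_mem_nhdsWithin] with y hy hxy
      have hxy : s₀ < y := hxy
      rw [slope_def_field, ← h, sub_zero] at hy
      exact (div_pos_iff_of_pos_right (by linarith)).1 hy
    · exact (hd.continuousAt.eventually_const_lt h).filter_mono nhdsWithin_le_nhds
  have hs₀c : s₀ < c := hs₀lt.trans hc.1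
  obtain ⟨b, hb, hbσ⟩ := mem_nhdsGT_iff_exists_Ioo_subset.1 hpos
  have hb : s₀ < b := hb
  obtain ⟨b₁, hb₁, hb₁'⟩ := exists_between (lt_min hb hs₀c)
  have hb₁b : b₁ < b := hb₁'.trans_le (min_le_left _ _)
  have hb₁c : b₁ < c := hb₁'.trans_le (min_le_right _ _)
  have hσc : ContinuousOn σ (Icc s₀ c) := fun x hx =>
    (hσ x (hr3 x hx.1 (hx.2.trans_lt hc.2))).continuousAt.continuousWithinAt
  have hσc1 : ContinuousOn σ (Icc b₁ c) := hσc.mono (Icc_subset_Icc_left hb₁.le)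
  have hσb₁ : 0 < σ b₁ := hbσ ⟨hb₁, hb₁b⟩
  -- the first later time at which the radial speed vanishes
  obtain ⟨m, ⟨⟨hmb, hmc⟩, hmσ⟩, hmmin⟩ : ∃ x, IsLeast (Icc b₁ c ∩ σ ⁻¹' {0}) x := by
    apply IsCompact.exists_isLeast
    · exact isCompact_Icc.of_isClosed_subset
        (hσc1.preimage_isClosed_of_isClosed isClosed_Icc isClosed_singleton) inter_subset_left
    · obtain ⟨x, hx, hx0⟩ := intermediate_value_Icc' hb₁c.le hσc1 ⟨hcneg.le, hσb₁.le⟩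
      exact ⟨x, hx, hx0⟩
  have hmσ : σ m = 0 := hmσ
  have hσpos : ∀ τ, s₀ < τ → τ < m → 0 < σ τ := by
    intro τ h1 h2
    rcases lt_or_ge τ b with h | h
    · exact hbσ ⟨h1, h⟩
    · by_contra! h3
      have h4 : b₁ ≤ τ := hb₁b.le.trans h
      obtain ⟨x, hx, hx0⟩ := intermediate_value_Icc' h4
        (hσc1.mono (Icc_subset_Icc_right (h2.le.trans hmc))) ⟨h3, hσb₁.le⟩
      have := hmmin ⟨⟨hx.1, hx.2.trans (h2.le.trans hmc)⟩, hx0⟩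
      linarith [hx.2]
  have hs₀m : s₀ < m := hb₁.trans_le hmb
  have hE : MonotoneOn (fun τ => σ τ ^ 2 / 2 + v (r τ)) (Icc s₀ m) := by
    have hd : ∀ τ ∈ Icc s₀ m, HasDerivAt (fun τ => σ τ ^ 2 / 2 + v (r τ))
        (σ τ * (a τ + v' (r τ))) τ := by
      intro τ hτ
      have h1 := hr3 τ hτ.1 (hτ.2.trans_lt (hmc.trans_lt hc.2))
      have h2 := (((hσ τ h1).pow 2).div_const 2).add ((hv (r τ)).comp τ (hr τ h1))
      convert! h2 using 1
      simp; ring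
    apply monotoneOn_of_deriv_nonneg (convex_Icc _ _)
    · exact fun τ hτ => (hd τ hτ).continuousAt.continuousWithinAt
    · intro τ hτ
      exact (hd τ (interior_subset hτ)).differentiableAt.differentiableWithinAt
    · intro τ hτ
      rw [(hd τ (interior_subset hτ)).deriv]
      rw [interior_Icc] at hτ
      have h1 := ha τ (hr3 τ hτ.1.le (hτ.2.trans (hmc.trans_lt hc.2)))
      exact mul_nonneg (hσpos τ hτ.1 hτ.2).le (by linarith)
  have h1 := hE (left_mem_Icc.2 hs₀m.le) (right_mem_Icc.2 hs₀m.le) hs₀m.le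
  simp only [hmσ, hs₀eq] at h1
  have h2 := hvlt _ (hr2 m hs₀m (hmc.trans_lt hc.2))
  nlinarith [sq_nonneg (σ s₀)]

/-- No return to a ball in dimension `d`, by applying `no_return_one_dim` to `r = ‖q‖`: the
centrifugal term only increases `r''`. -/
theorem no_return {F : Type*} [NormedAddCommGroup F] [InnerProductSpace ℝ F]
    {q p A : ℝ → F} {v v' : ℝ → ℝ} {ρ s t : ℝ} (hρ : 0 < ρ)
    (hq : ∀ τ, HasDerivAt q (p τ) τ) (hp : ∀ τ, HasDerivAt p (A τ) τ)
    (hA : ∀ τ, ρ ≤ ‖q τ‖ → - v' ‖q τ‖ < ⟪A τ, ‖q τ‖⁻¹ • q τ⟫)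
    (hv : ∀ x, HasDerivAt v (v' x) x) (hvlt : ∀ x, ρ < x → v x < v ρ)
    (h0 : ‖q 0‖ ≤ ρ) (ht : ‖q t‖ ≤ ρ) (hs0 : 0 ≤ s) (hst : s ≤ t) : ‖q s‖ ≤ ρ := by
  have hqc : Continuous q := continuous_iff_continuousAt.2 fun τ => (hq τ).continuousAt
  have hr : ∀ τ, ρ ≤ ‖q τ‖ → HasDerivAt (fun τ => ‖q τ‖) (⟪q τ, p τ⟫ / ‖q τ‖) τ := by
    intro τ hτ
    have h1 : 0 < ‖q τ‖ := hρ.trans_le hτ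
    have h2 := ((hq τ).norm_sq).sqrt (by positivity)
    simp only [Real.sqrt_sq (norm_nonneg _)] at h2
    convert! h2 using 1
    field_simp
  refine no_return_one_dim (r := fun τ => ‖q τ‖) (σ := fun τ => ⟪q τ, p τ⟫ / ‖q τ‖)
    (a := fun τ => ((⟪q τ, A τ⟫ + ⟪p τ, p τ⟫) * ‖q τ‖ - ⟪q τ, p τ⟫ * (⟪q τ, p τ⟫ / ‖q τ‖))
      / ‖q τ‖ ^ 2) (v := v) (v' := v') hqc.norm hr ?_ ?_ hv hvlt h0 ht hs0 hst
  · intro τ hτ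
    have h1 : ‖q τ‖ ≠ 0 := (hρ.trans_le hτ).ne'
    exact ((hq τ).inner ℝ (hp τ)).div (hr τ hτ) h1
  · intro τ hτ
    have h1 : 0 < ‖q τ‖ := hρ.trans_le hτ
    refine (hA τ hτ).trans_le ?_
    have h2 : ⟪q τ, p τ⟫ ^ 2 ≤ ‖q τ‖ ^ 2 * ⟪p τ, p τ⟫ := by
      have := real_inner_mul_inner_self_le (q τ) (p τ)
      rw [real_inner_self_eq_norm_sq (q τ)] at this
      nlinarith
    rw [real_inner_smul_right, real_inner_comm, le_div_iff₀ (by positivity)]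
    have h3 : ⟪q τ, p τ⟫ * (⟪q τ, p τ⟫ / ‖q τ‖) ≤ ‖q τ‖ * ⟪p τ, p τ⟫ := by
      rw [mul_div_assoc', div_le_iff₀ h1]
      nlinarith
    have h4 : ‖q τ‖⁻¹ * ⟪q τ, A τ⟫ * ‖q τ‖ ^ 2 = ⟪q τ, A τ⟫ * ‖q τ‖ := by field_simp
    rw [h4]
    nlinarith

/-! ### The truncated system -/

/-- Radial retraction of a normed space onto the closed ball of radius `R`. -/
def radialProj {F : Type*} [NormedAddCommGroup F] [NormedSpace ℝ F] (R : ℝ) (q : F) : F :=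
  (R / max R ‖q‖) • q

section radialProj

variable {F : Type*} [NormedAddCommGroup F] [NormedSpace ℝ F] {R : ℝ}

theorem radialProj_of_le (hR : 0 < R) {q : F} (hq : ‖q‖ ≤ R) : radialProj R q = q := by
  rw [radialProj, max_eq_left hq, div_self hR.ne', one_smul]

theorem norm_radialProj (hR : 0 < R) (q : F) : ‖radialProj R q‖ = min ‖q‖ R := by
  have h1 : 0 < max R ‖q‖ := lt_max_of_lt_left hR
  rw [radialProj, norm_smul, Real.norm_eq_abs, abs_of_pos (div_pos hR h1)]
  rcases le_total R ‖q‖ with h | h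
  · rw [max_eq_right h, min_eq_right h]
    have : 0 < ‖q‖ := hR.trans_le h
    field_simp
  · rw [max_eq_left h, min_eq_left h]
    field_simp

theorem norm_radialProj_le (hR : 0 < R) (q : F) : ‖radialProj R q‖ ≤ R :=
  (norm_radialProj hR q).trans_le (min_le_right _ _)

theorem direction_radialProj (hR : 0 < R) {q : F} (hq : 0 < ‖q‖) :
    ‖radialProj R q‖⁻¹ • radialProj R q = ‖q‖⁻¹ • q := by
  have h1 : 0 < max R ‖q‖ := lt_max_of_lt_left hR
  rw [radialProj, norm_smul, Real.norm_eq_abs, abs_of_pos (div_pos hR h1), smul_smul]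
  congr 1
  field_simp

theorem norm_radialProj_sub_le (hR : 0 < R) (x y : F) :
    ‖radialProj R x - radialProj R y‖ ≤ 2 * ‖x - y‖ := by
  have hx : 0 < max R ‖x‖ := lt_max_of_lt_left hR
  have hy : 0 < max R ‖y‖ := lt_max_of_lt_left hR
  have h1 : radialProj R x - radialProj R y =
      (R / max R ‖x‖) • (x - y) + (R / max R ‖x‖ - R / max R ‖y‖) • y := by
    simp only [radialProj, smul_sub, sub_smul]; abel
  have h2 : R / max R ‖x‖ ≤ 1 := (div_le_one hx).2 (le_max_left _ _)
  have h3 : |max R ‖y‖ - max R ‖x‖| ≤ ‖x - y‖ := by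
    refine (abs_max_sub_max_le_max _ _ _ _).trans ?_
    rw [sub_self, abs_zero, max_eq_right (abs_nonneg _), norm_sub_rev]
    exact abs_norm_sub_norm_le _ _
  have h4 : |R / max R ‖x‖ - R / max R ‖y‖| * ‖y‖ ≤ ‖x - y‖ := by
    have h5 : R / max R ‖x‖ - R / max R ‖y‖ =
        (R / max R ‖x‖) * ((max R ‖y‖ - max R ‖x‖) / max R ‖y‖) := by
      field_simp
    rw [h5, abs_mul, abs_of_pos (div_pos hR hx), abs_div, abs_of_pos hy]
    calc R / max R ‖x‖ * (|max R ‖y‖ - max R ‖x‖| / max R ‖y‖) * ‖y‖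
        ≤ 1 * (‖x - y‖ / max R ‖y‖) * max R ‖y‖ := by
          gcongr
          exact le_max_right _ _
      _ = ‖x - y‖ := by field_simp
  rw [h1]
  calc _ ≤ ‖(R / max R ‖x‖) • (x - y)‖ + ‖(R / max R ‖x‖ - R / max R ‖y‖) • y‖ :=
        norm_add_le _ _
    _ ≤ 1 * ‖x - y‖ + ‖x - y‖ := by
        rw [norm_smul, norm_smul, Real.norm_eq_abs, Real.norm_eq_abs, abs_of_pos (div_pos hR hx)]
        gcongr
    _ = _ := by ring

end radialProj

/-- `X` is the flow of the mean-field Newton system `q' = p`,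
`p' = -g(q) - ∫ k(q - q(y)) dμ₀(y)`, in Lagrangian coordinates: `X t x` is the position at time
`t` of the particle that starts at `x`, and `μ₀` is the law of the starting points. -/
structure IsMeanFieldFlow {F : Type*} [NormedAddCommGroup F] [NormedSpace ℝ F]
    [MeasurableSpace F] (μ₀ : Measure (F × F)) (g k : F → F) (X : ℝ → F × F → F × F) : Prop where
  cont : Continuous (fun z : ℝ × (F × F) => X z.1 z.2)
  init : ∀ x, X 0 x = x
  deriv : ∀ t x, HasDerivAt (fun s => X s x)
    (- g (X t x).2 - ∫ y, k ((X t x).2 - (X t y).2) ∂μ₀, (X t x).1) t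

theorem IsMeanFieldFlow.deriv_fst {F : Type*} [NormedAddCommGroup F] [NormedSpace ℝ F]
    [MeasurableSpace F] {μ₀ : Measure (F × F)} {g k : F → F} {X : ℝ → F × F → F × F}
    (hX : IsMeanFieldFlow μ₀ g k X) (t : ℝ) (x : F × F) : HasDerivAt (fun s => (X s x).1)
    (- g (X t x).2 - ∫ y, k ((X t x).2 - (X t y).2) ∂μ₀) t :=
  (ContinuousLinearMap.fst ℝ F F).hasFDerivAt.comp_hasDerivAt t (hX.deriv t x)

theorem IsMeanFieldFlow.deriv_snd {F : Type*} [NormedAddCommGroup F] [NormedSpace ℝ F]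
    [MeasurableSpace F] {μ₀ : Measure (F × F)} {g k : F → F} {X : ℝ → F × F → F × F}
    (hX : IsMeanFieldFlow μ₀ g k X) (t : ℝ) (x : F × F) : HasDerivAt (fun s => (X s x).2)
    (X t x).1 t :=
  (ContinuousLinearMap.snd ℝ F F).hasFDerivAt.comp_hasDerivAt t (hX.deriv t x)

theorem contDiff_gradient {F : Type*} [NormedAddCommGroup F] [InnerProductSpace ℝ F]
    [CompleteSpace F] {f : F → ℝ} (hf : ContDiff ℝ 2 f) : ContDiff ℝ 1 (gradient f) :=
  (InnerProductSpace.toDual ℝ F).symm.toContinuousLinearEquiv.contDiff.comp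
    (hf.fderiv_right (m := 1) (by norm_num))

theorem hasCompactSupport_gradient {F : Type*} [NormedAddCommGroup F] [InnerProductSpace ℝ F]
    [CompleteSpace F] {f : F → ℝ} (hf : HasCompactSupport f) : HasCompactSupport (gradient f) :=
  (hf.fderiv ℝ).comp_left (g := (InnerProductSpace.toDual ℝ F).symm) (map_zero _)

theorem exists_bound_lt {F G : Type*} [TopologicalSpace F] [Nonempty F] [NormedAddCommGroup G]
    {k : F → G}
    (hk : Continuous k) (hc : HasCompactSupport k) {B : ℝ} (hB : ∀ q, ‖k q‖ < B) :
    ∃ B' < B, ∀ q, ‖k q‖ ≤ B' := by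
  obtain ⟨x₀⟩ := ‹Nonempty F›
  obtain ⟨x, -, hx⟩ := (hc.insert x₀).exists_isMaxOn (insert_nonempty _ _) hk.norm.continuousOn
  refine ⟨‖k x‖, hB x, fun q => ?_⟩
  by_cases hq : q ∈ tsupport k
  · exact hx (mem_insert_of_mem _ hq)
  · rw [image_eq_zero_of_notMem_tsupport hq, norm_zero]
    exact norm_nonneg _

theorem exists_lipschitz_comp_radialProj {F : Type*} [NormedAddCommGroup F] [NormedSpace ℝ F]
    [FiniteDimensional ℝ F] {f : F → F} (hf : ContDiff ℝ 1 f) {R : ℝ} (hR : 0 < R) :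
    ∃ L : ℝ, 0 ≤ L ∧ ∀ x y, ‖f (radialProj R x) - f (radialProj R y)‖ ≤ L * ‖x - y‖ := by
  have := FiniteDimensional.proper ℝ F
  obtain ⟨C, hC⟩ := (isCompact_closedBall (0:F) R).exists_bound_of_continuousOn
    (hf.continuous_fderiv one_ne_zero).continuousOn
  have hC0 : 0 ≤ C := (norm_nonneg _).trans (hC 0 (by simp [hR.le]))
  refine ⟨C * 2, by positivity, fun x y => ?_⟩
  have h1 : ‖f (radialProj R x) - f (radialProj R y)‖ ≤ C * ‖radialProj R x - radialProj R y‖ :=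
    (convex_closedBall (0:F) R).norm_image_sub_le_of_norm_fderiv_le (𝕜 := ℝ)
      (fun z _ => hf.differentiable one_ne_zero z) hC
      (by simpa using norm_radialProj_le hR y) (by simpa using norm_radialProj_le hR x)
  refine h1.trans ?_
  rw [mul_assoc]
  gcongr
  exact norm_radialProj_sub_le hR x y

theorem exists_truncated_flow {d : ℕ} {W Φ : Euc d → ℝ} (hW : ContDiff ℝ 2 W)
    (hWc : HasCompactSupport W) (hΦ : ContDiff ℝ 2 Φ)
    (μ₀ : Measure (Euc d × Euc d)) [IsProbabilityMeasure μ₀] (hμ₀ : Integrable (fun x => ‖x‖) μ₀)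
    {R : ℝ} (hR : 0 < R) :
    ∃ X, IsMeanFieldFlow μ₀ (fun q => gradient Φ (radialProj R q)) (gradient W) X := by
  have hk := contDiff_gradient hW
  have hkc := hasCompactSupport_gradient hWc
  have hg := contDiff_gradient hΦ
  obtain ⟨Lk, hLk⟩ := hk.lipschitzWith_of_hasCompactSupport hkc one_ne_zero
  obtain ⟨B, hB⟩ := hkc.exists_bound_of_continuous hk.continuous
  obtain ⟨G, hG⟩ := (isCompact_closedBall (0:Euc d) R).exists_bound_of_continuousOn
    hg.continuous.continuousOn
  obtain ⟨Lg, hLg0, hLg⟩ := exists_lipschitz_comp_radialProj hg hR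
  obtain ⟨X, h1, h2, h3⟩ := exists_meanField_flow μ₀ hμ₀ (fun q => gradient Φ (radialProj R q))
    (gradient W) G B Lg Lk (fun q => hG _ (by simpa using norm_radialProj_le hR q)) hB hLg
    (fun q q' => by simpa [dist_eq_norm] using hLk.dist_le_mul q q') hLg0 Lk.2
  exact ⟨X, h1, h2, h3⟩

theorem norm_integral_le_of_prob {α G : Type*} [MeasurableSpace α] [NormedAddCommGroup G]
    [NormedSpace ℝ G] (μ : Measure α) [IsProbabilityMeasure μ] {f : α → G} {C : ℝ}
    (hf : ∀ x, ‖f x‖ ≤ C) : ‖∫ x, f x ∂μ‖ ≤ C := by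
  simpa using norm_integral_le_of_norm_le_const (μ := μ) (Eventually.of_forall hf)

/-- A ring of no return for `u` inside the truncation radius is a ring of no return for the
truncated flow. The effective radial potential has derivative `u' (min r R)`, and stays below its
value at `ρ` beyond `R` because `u' R ≤ 0`. -/
theorem truncated_flow_no_return {d : ℕ} {W Φ : Euc d → ℝ}
    {μ₀ : Measure (Euc d × Euc d)} [IsProbabilityMeasure μ₀]
    {B B' : ℝ} (hBB : B' < B) (hB' : ∀ q, ‖gradient W q‖ ≤ B')
    {u : ℝ → ℝ} (hu : ContDiff ℝ 2 u)
    (hu' : ∀ r : ℝ, 0 < r → ∀ x : Euc d, ‖x‖ = r →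
      B + ⟪gradient Φ x, ‖x‖⁻¹ • x⟫ ≤ deriv u r)
    {ρ R : ℝ} (hρ : 0 < ρ) (hρR : ρ < R)
    (hringρ : ∀ s, ρ < s → u s < u ρ) (hringR : ∀ s, R < s → u s < u R)
    {X : ℝ → Euc d × Euc d → Euc d × Euc d}
    (hX : IsMeanFieldFlow μ₀ (fun q => gradient Φ (radialProj R q)) (gradient W) X)
    {x : Euc d × Euc d} {s t : ℝ} (h0 : ‖x.2‖ ≤ ρ) (ht : ‖(X t x).2‖ ≤ ρ)
    (hs0 : 0 ≤ s) (hst : s ≤ t) : ‖(X s x).2‖ ≤ ρ := by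
  have hR : 0 < R := hρ.trans hρR
  have hdu : Continuous (deriv u) := hu.continuous_deriv (by norm_num)
  have hudiff : ∀ y, HasDerivAt u (deriv u y) y := fun y =>
    (hu.differentiable (by norm_num) y).hasDerivAt
  have hc : Continuous fun y => deriv u (min y R) := by fun_prop
  have hv : ∀ y, HasDerivAt (fun y => ∫ z in (0:ℝ)..y, deriv u (min z R)) (deriv u (min y R)) y :=
    fun y => (hc.integral_hasStrictDerivAt 0 y).hasDerivAt
  have hsub : ∀ a b, a ≤ b → b ≤ R → ∫ z in a..b, deriv u (min z R) = u b - u a := by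
    intro a b hab hbR
    rw [← intervalIntegral.integral_eq_sub_of_hasDerivAt (fun y _ => hudiff y)
      (hdu.intervalIntegrable _ _)]
    apply intervalIntegral.integral_congr
    intro z hz
    rw [uIcc_of_le hab] at hz
    simp only [min_eq_left (hz.2.trans hbR)]
  have huR : deriv u R ≤ 0 := deriv_nonpos_of_eventually_le (hudiff R) (by
    filter_upwards [self_mem_nhdsWithin] with y hy using (hringR y hy).le)
  have hvlt : ∀ y, ρ < y → (∫ z in (0:ℝ)..y, deriv u (min z R)) <
      ∫ z in (0:ℝ)..ρ, deriv u (min z R) := by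
    intro y hy
    have hii : ∀ a b, IntervalIntegrable (fun z => deriv u (min z R)) volume a b := fun a b =>
      hc.intervalIntegrable a b
    rw [← sub_neg, intervalIntegral.integral_interval_sub_left (hii _ _) (hii _ _)]
    rcases le_or_gt y R with hyR | hyR
    · rw [hsub _ _ hy.le hyR]
      linarith [hringρ y hy]
    · rw [← intervalIntegral.integral_add_adjacent_intervals (hii ρ R) (hii R y),
        hsub _ _ hρR.le le_rfl]
      have h1 : ∫ z in R..y, deriv u (min z R) = ∫ z in R..y, deriv u R := by
        apply intervalIntegral.integral_congr
        intro z hz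
        rw [uIcc_of_le hyR.le] at hz
        simp only [min_eq_right hz.1]
      rw [h1, intervalIntegral.integral_const, smul_eq_mul]
      nlinarith [hringρ R hρR]
  refine no_return (q := fun τ => (X τ x).2) (p := fun τ => (X τ x).1)
    (A := fun τ => - gradient Φ (radialProj R (X τ x).2)
      - ∫ y, gradient W ((X τ x).2 - (X τ y).2) ∂μ₀)
    (v' := fun y => deriv u (min y R)) hρ (fun τ => hX.deriv_snd τ x)
    (fun τ => hX.deriv_fst τ x) ?_ hv hvlt (by simpa [hX.init] using h0) ht hs0 hst
  intro τ hτ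
  set q := (X τ x).2
  have hq : 0 < ‖q‖ := hρ.trans_le hτ
  have h1 := hu' ‖radialProj R q‖ (by rw [norm_radialProj hR]; exact lt_min hq hR) _ rfl
  rw [direction_radialProj hR hq, norm_radialProj hR] at h1
  have h2 : ⟪∫ y, gradient W (q - (X τ y).2) ∂μ₀, ‖q‖⁻¹ • q⟫ ≤ B' := by
    refine (real_inner_le_norm _ _).trans ?_
    rw [norm_smul, norm_inv, norm_norm, inv_mul_cancel₀ hq.ne', mul_one]
    exact norm_integral_le_of_prob μ₀ fun y => hB' _
  rw [inner_sub_left, inner_neg_left]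
  linarith

/-- Linear growth of the momentum of a particle that stays in a ball, with a constant that does not
depend on the truncation radius. -/
theorem truncated_flow_momentum {d : ℕ} {W Φ : Euc d → ℝ}
    {μ₀ : Measure (Euc d × Euc d)} [IsProbabilityMeasure μ₀]
    {B' : ℝ} (hB' : ∀ q, ‖gradient W q‖ ≤ B')
    {ρ R C : ℝ} (hρ : 0 < ρ) (hρR : ρ ≤ R) (hC : ∀ q, ‖q‖ ≤ ρ → ‖gradient Φ q‖ ≤ C)
    {X : ℝ → Euc d × Euc d → Euc d × Euc d}
    (hX : IsMeanFieldFlow μ₀ (fun q => gradient Φ (radialProj R q)) (gradient W) X)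
    {x : Euc d × Euc d} {t : ℝ} (ht : 0 ≤ t) (hin : ∀ s, 0 ≤ s → s ≤ t → ‖(X s x).2‖ ≤ ρ) :
    ‖(X t x).1‖ ≤ ‖x.1‖ + (C + B') * t := by
  have hR : 0 < R := hρ.trans_le hρR
  have h := norm_image_sub_le_of_norm_deriv_le_segment' (f := fun s => (X s x).1) (a := 0) (b := t)
    (C := C + B') (f' := fun τ => - gradient Φ (radialProj R (X τ x).2)
      - ∫ y, gradient W ((X τ x).2 - (X τ y).2) ∂μ₀)
    (fun s _ => (hX.deriv_fst s x).hasDerivWithinAt) (by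
      intro s hs
      refine (norm_sub_le _ _).trans (add_le_add ?_ (norm_integral_le_of_prob μ₀ fun y => hB' _))
      have h1 := hin s hs.1 hs.2.le
      rw [norm_neg, radialProj_of_le hR (h1.trans hρR)]
      exact hC _ h1) t (right_mem_Icc.2 ht)
  simp only [hX.init, sub_zero] at h
  linarith [norm_sub_norm_le (X t x).1 x.1]

theorem integrable_norm_of_exp {d : ℕ} {α₀ : ℝ} (hα₀ : 0 < α₀) {μ₀ : Measure (Euc d × Euc d)}
    (hexp : ∫⁻ x, ENNReal.ofReal (Real.exp (α₀ * phNorm x)) ∂μ₀ < ⊤) :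
    Integrable (fun x => ‖x‖) μ₀ := by
  have hc : Continuous fun x : Euc d × Euc d => Real.exp (α₀ * phNorm x) := by
    unfold phNorm; fun_prop
  have h1 : Integrable (fun x => Real.exp (α₀ * phNorm x)) μ₀ := by
    refine ⟨hc.aestronglyMeasurable, ?_⟩
    rw [hasFiniteIntegral_iff_ofReal (Eventually.of_forall fun x => (Real.exp_pos _).le)]
    exact hexp
  refine (h1.const_mul α₀⁻¹).mono' continuous_norm.aestronglyMeasurable
    (Eventually.of_forall fun x => ?_)
  have h2 : ‖x‖ ≤ phNorm x := by
    rw [Prod.norm_def]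
    exact max_le (Real.le_sqrt_of_sq_le (by nlinarith [sq_nonneg ‖x.2‖]))
      (Real.le_sqrt_of_sq_le (by nlinarith [sq_nonneg ‖x.1‖]))
  rw [norm_norm, inv_mul_eq_div, le_div_iff₀ hα₀]
  nlinarith [Real.add_one_le_exp (α₀ * phNorm x), mul_le_mul_of_nonneg_left h2 hα₀.le]

theorem IsMeanFieldFlow.continuous {F : Type*} [NormedAddCommGroup F] [NormedSpace ℝ F]
    [MeasurableSpace F] {μ₀ : Measure (F × F)} {g k : F → F} {X : ℝ → F × F → F × F}
    (hX : IsMeanFieldFlow μ₀ g k X) (t : ℝ) : Continuous (X t) :=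
  hX.cont.comp (f := fun x => (t, x)) (by fun_prop)

/-- The velocity of a particle of the truncated flow is bounded while it stays in a compact set,
uniformly with respect to the truncation radius. -/
theorem exists_velocity_bound {d : ℕ} {W Φ : Euc d → ℝ} (hΦ : ContDiff ℝ 2 Φ)
    (μ₀ : Measure (Euc d × Euc d)) [IsProbabilityMeasure μ₀]
    {B' : ℝ} (hB' : ∀ q, ‖gradient W q‖ ≤ B') {S : Set (Euc d × Euc d)} (hS : IsCompact S) :
    ∃ C : ℝ, 0 ≤ C ∧ ∀ (R : ℝ) (X : ℝ → Euc d × Euc d → Euc d × Euc d), 0 < R →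
      IsMeanFieldFlow μ₀ (fun q => gradient Φ (radialProj R q)) (gradient W) X →
      ∀ t x, X t x ∈ S → ‖deriv (fun s => X s x) t‖ ≤ C := by
  obtain ⟨M, hM⟩ := hS.isBounded.subset_closedBall 0
  obtain ⟨G, hG⟩ := (isCompact_closedBall (0:Euc d) M).exists_bound_of_continuousOn
    (contDiff_gradient hΦ).continuous.continuousOn
  refine ⟨max 0 (max (G + B') M), le_max_left _ _, fun R X hR hX t x hx => ?_⟩
  have hx' : ‖X t x‖ ≤ M := by simpa using hM hx
  rw [(hX.deriv t x).deriv, Prod.norm_def]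
  refine le_max_of_le_right (max_le_max ?_ ((norm_fst_le _).trans hx'))
  refine (norm_sub_le _ _).trans (add_le_add ?_ (norm_integral_le_of_prob μ₀ fun y => hB' _))
  rw [norm_neg]
  refine hG _ ?_
  rw [mem_closedBall_zero_iff, norm_radialProj hR]
  exact (min_le_left _ _).trans ((norm_snd_le _).trans hx')

/-- Lipschitz bound in time for the truncated laws tested against `ψ`, with a constant independent
of the truncation radius. -/
theorem exists_lipschitz_bound {d : ℕ} {W Φ : Euc d → ℝ} (hΦ : ContDiff ℝ 2 Φ)
    (μ₀ : Measure (Euc d × Euc d)) [IsProbabilityMeasure μ₀]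
    {B' : ℝ} (hB' : ∀ q, ‖gradient W q‖ ≤ B') {ψ : Euc d × Euc d → ℝ}
    (hψ : ContDiff ℝ (⊤ : ℕ∞) ψ) (hψc : HasCompactSupport ψ) :
    ∃ C : ℝ, ∀ (R : ℝ) (X : ℝ → Euc d × Euc d → Euc d × Euc d), 0 < R →
      IsMeanFieldFlow μ₀ (fun q => gradient Φ (radialProj R q)) (gradient W) X →
      ∀ s t, |∫ x, ψ x ∂(μ₀.map (X t)) - ∫ x, ψ x ∂(μ₀.map (X s))| ≤ C * |t - s| := by
  obtain ⟨C, hC0, hC⟩ := exists_velocity_bound hΦ μ₀ hB' hψc.isCompact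
  obtain ⟨K, hK⟩ := (hψc.fderiv ℝ).exists_bound_of_continuous (hψ.continuous_fderiv (by simp))
  have hK0 : 0 ≤ K := (norm_nonneg _).trans (hK 0)
  refine ⟨K * C, fun R X hR hX s t => ?_⟩
  have hd : ∀ x τ, HasDerivAt (fun τ => ψ (X τ x))
      (fderiv ℝ ψ (X τ x) (deriv (fun s => X s x) τ)) τ := fun x τ =>
    (hψ.differentiable (by simp) _).hasFDerivAt.comp_hasDerivAt τ
      (hX.deriv τ x).differentiableAt.hasDerivAt
  have hb : ∀ x, ‖ψ (X t x) - ψ (X s x)‖ ≤ K * C * |t - s| := by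
    intro x
    have := convex_univ.norm_image_sub_le_of_norm_hasDerivWithin_le (𝕜 := ℝ) (C := K * C)
      (f := fun τ => ψ (X τ x)) (x := s) (y := t) (fun τ _ => (hd x τ).hasDerivWithinAt)
      (fun τ _ => ?_) (mem_univ s) (mem_univ t)
    · simpa using this
    by_cases h : X τ x ∈ tsupport ψ
    · exact (ContinuousLinearMap.le_opNorm _ _).trans
        (mul_le_mul (hK _) (hC R X hR hX τ x h) (norm_nonneg _) hK0)
    · rw [image_eq_zero_of_notMem_tsupport (f := fderiv ℝ ψ)
        (fun h' => h (tsupport_fderiv_subset ℝ h'))]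
      simp only [zero_apply, norm_zero]
      positivity
  have hψi : ∀ τ, Integrable (fun x => ψ (X τ x)) μ₀ := fun τ => by
    obtain ⟨D, hD⟩ := hψc.exists_bound_of_continuous hψ.continuous
    exact Integrable.of_bound (C := D) (hψ.continuous.comp (hX.continuous τ)).aestronglyMeasurable
      (Eventually.of_forall fun x => hD _)
  rw [integral_map (hX.continuous t).aemeasurable hψ.continuous.aestronglyMeasurable,
    integral_map (hX.continuous s).aemeasurable hψ.continuous.aestronglyMeasurable,
    ← integral_sub (hψi t) (hψi s)]
  exact norm_integral_le_of_prob μ₀ hb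

theorem exists_tail_le {E : Type*} [NormedAddCommGroup E] [NormedSpace ℝ E]
    [FiniteDimensional ℝ E] [MeasurableSpace E] [BorelSpace E] (μ : Measure E) [IsFiniteMeasure μ]
    {ε : ℝ} (hε : 0 < ε) : ∃ M : ℝ, 0 < M ∧ μ.real {x | M < ‖x‖} ≤ ε := by
  have := FiniteDimensional.proper ℝ E
  obtain ⟨K, hK, hμK⟩ := isTightMeasureSet_iff_exists_isCompact_measure_compl_le.1
    (isTightMeasureSet_singleton (μ := μ)) (ENNReal.ofReal ε) (ENNReal.ofReal_pos.2 hε)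
  obtain ⟨M, hM⟩ := hK.isBounded.subset_closedBall 0
  refine ⟨max 1 M, by positivity, ENNReal.toReal_le_of_le_ofReal hε.le
    ((measure_mono fun x hx hxK => ?_).trans (hμK μ rfl))⟩
  have h1 : ‖x‖ ≤ M := by simpa using hM hxK
  exact absurd hx (not_lt.2 (h1.trans (le_max_right _ _)))

theorem measurableSet_tail {F : Type*} [NormedAddCommGroup F] [MeasurableSpace F] [BorelSpace F]
    (r K : ℝ) : MeasurableSet {y : F × F | ‖y.2‖ ≤ r ∧ K < ‖y.1‖} :=
  (measurable_snd.norm measurableSet_Iic).inter (measurable_fst.norm measurableSet_Ioi)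

/-- Up to small probability, the particles of the truncated flows found in a given ball of
positions have bounded momenta, uniformly with respect to the truncation radius: a particle that
starts inside a ring of no return and is found inside it at time `t` has never left it. -/
theorem exists_momentum_tail_le {d : ℕ} {W Φ : Euc d → ℝ} (hΦ : ContDiff ℝ 2 Φ)
    (μ₀ : Measure (Euc d × Euc d)) [IsProbabilityMeasure μ₀]
    {B B' : ℝ} (hBB : B' < B) (hB' : ∀ q, ‖gradient W q‖ ≤ B')
    {u : ℝ → ℝ} (hu : ContDiff ℝ 2 u)
    (hu' : ∀ r : ℝ, 0 < r → ∀ x : Euc d, ‖x‖ = r →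
      B + ⟪gradient Φ x, ‖x‖⁻¹ • x⟫ ≤ deriv u r)
    {rad : ℕ → ℝ} (hmono : StrictMono rad) (hpos : ∀ n, 0 < rad n)
    (hinf : Tendsto rad atTop atTop) (hring : ∀ n s, rad n < s → u s < u (rad n))
    {X : ℕ → ℝ → Euc d × Euc d → Euc d × Euc d}
    (hX : ∀ n, IsMeanFieldFlow μ₀ (fun q => gradient Φ (radialProj (rad n) q)) (gradient W) (X n))
    (T r₀ : ℝ) {ε : ℝ} (hε : 0 < ε) :
    ∃ K : ℝ, 0 < K ∧ ∀ᶠ n in atTop, ∀ t ∈ Icc (0:ℝ) T,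
      (μ₀.map (X n t)).real {y | ‖y.2‖ ≤ r₀ ∧ K < ‖y.1‖} ≤ ε := by
  obtain ⟨M, hM0, hM⟩ := exists_tail_le μ₀ hε
  obtain ⟨L, hL⟩ := (hinf.eventually_ge_atTop (max r₀ M)).exists
  obtain ⟨C, hC⟩ := (isCompact_closedBall (0:Euc d) (rad L)).exists_bound_of_continuousOn
    (contDiff_gradient hΦ).continuous.continuousOn
  have hB'0 : 0 ≤ B' := (norm_nonneg _).trans (hB' 0)
  have hC0 : 0 ≤ C := (norm_nonneg _).trans (hC 0 (by simp [(hpos L).le]))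
  refine ⟨M + (C + B') * max T 0, by positivity, ?_⟩
  -- the particles counted here all start outside the ball of radius `M`
  filter_upwards [eventually_gt_atTop L] with n hn t ht
  rw [map_measureReal_apply ((hX n).continuous t).measurable (measurableSet_tail _ _)]
  refine (measureReal_mono fun x hx => ?_).trans hM
  obtain ⟨hx2, hx1⟩ := hx
  by_contra! hxM
  simp only [mem_ofPred_eq, not_lt] at hxM
  have h0 : ‖x.2‖ ≤ rad L := (norm_snd_le x).trans (hxM.trans ((le_max_right _ _).trans hL))
  have h1 := truncated_flow_momentum hB' (hpos L) (hmono hn).le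
    (fun q hq => hC q (by simpa using hq)) (hX n) ht.1 (fun s hs hst =>
      truncated_flow_no_return hBB hB' hu hu' (hpos L) (hmono hn) (hring L) (hring n) (hX n) h0
        (hx2.trans ((le_max_left _ _).trans hL)) hs hst)
  have h2 : (C + B') * t ≤ (C + B') * max T 0 :=
    mul_le_mul_of_nonneg_left (ht.2.trans (le_max_left _ _)) (by positivity)
  linarith [norm_fst_le x]

/-! ### Passage to the limit -/

/-- Vague convergence of phase-space measures upgrades to convergence against functions of the
position only, once the momenta of the particles in each ball of positions are tight. -/
theorem tendsto_integral_comp_snd {F : Type*} [NormedAddCommGroup F] [NormedSpace ℝ F]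
    [FiniteDimensional ℝ F] [MeasurableSpace F] [BorelSpace F] {ν : ℕ → Measure (F × F)}
    [∀ n, IsProbabilityMeasure (ν n)] {μ : Measure (F × F)} [IsFiniteMeasure μ]
    (hvague : ∀ ψ : F × F → ℝ, Continuous ψ → HasCompactSupport ψ →
      Tendsto (fun n => ∫ x, ψ x ∂(ν n)) atTop (𝓝 (∫ x, ψ x ∂μ)))
    (htight : ∀ r ε : ℝ, 0 < ε → ∃ K : ℝ, 0 < K ∧ ∀ᶠ n in atTop,
      (ν n).real {y | ‖y.2‖ ≤ r ∧ K < ‖y.1‖} ≤ ε)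
    {f : F → ℝ} (hf : Continuous f) (hfc : HasCompactSupport f) :
    Tendsto (fun n => ∫ y, f y.2 ∂(ν n)) atTop (𝓝 (∫ y, f y.2 ∂μ)) := by
  have := FiniteDimensional.proper ℝ F
  obtain ⟨r, hr⟩ := hfc.isCompact.isBounded.subset_closedBall 0
  obtain ⟨D, hD⟩ := hfc.exists_bound_of_continuous hf
  have hD0 : 0 ≤ D := (norm_nonneg _).trans (hD 0)
  -- truncation in the momentum variable
  set χ : ℝ → F × F → ℝ := fun K y => f y.2 * max 0 (min 1 (K + 1 - ‖y.1‖)) with hχ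
  have hχc : ∀ K, Continuous (χ K) := fun K => by fun_prop
  have hχs : ∀ K, HasCompactSupport (χ K) := by
    intro K
    refine HasCompactSupport.of_support_subset_isCompact
      ((isCompact_closedBall (0:F) (K + 1)).prod (isCompact_closedBall (0:F) r)) fun y hy => ?_
    rw [Function.mem_support, hχ, mul_ne_zero_iff] at hy
    refine ⟨?_, hr (subset_tsupport _ hy.1)⟩
    by_contra h
    rw [mem_closedBall_zero_iff, not_le] at h
    exact hy.2 (max_eq_left ((min_le_right _ _).trans (by linarith)))
  have hdiff : ∀ K (m : Measure (F × F)) [IsFiniteMeasure m],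
      |∫ y, f y.2 ∂m - ∫ y, χ K y ∂m| ≤ D * m.real {y | ‖y.2‖ ≤ r ∧ K < ‖y.1‖} := by
    intro K m _
    have hi1 : Integrable (fun y => f y.2) m :=
      Integrable.of_bound (C := D) (hf.comp continuous_snd).aestronglyMeasurable
        (Eventually.of_forall fun x => hD _)
    have hi2 : Integrable (χ K) m := (hχc K).integrable_of_hasCompactSupport (hχs K)
    rw [← integral_sub hi1 hi2]
    refine (norm_integral_le_of_norm_le (μ := m) (f := fun y => f y.2 - χ K y)
      (g := {y : F × F | ‖y.2‖ ≤ r ∧ K < ‖y.1‖}.indicator fun _ => D)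
      ((integrable_const (μ := m) D).indicator (measurableSet_tail r K))
      (Eventually.of_forall fun y => ?_)).trans_eq ?_
    · by_cases h1 : f y.2 = 0
      · simp only [hχ, h1, zero_mul, sub_zero, norm_zero]
        exact indicator_nonneg (fun _ _ => hD0) _
      have h2 : ‖y.2‖ ≤ r := by simpa using hr (subset_tsupport _ h1)
      rcases le_or_gt ‖y.1‖ K with h3 | h3
      · simp only [hχ]
        rw [min_eq_left (by linarith), max_eq_right zero_le_one, mul_one, sub_self, norm_zero]
        exact indicator_nonneg (fun _ _ => hD0) _
      · rw [indicator_of_mem (by exact ⟨h2, h3⟩)]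
        have h4 : f y.2 - χ K y = f y.2 * (1 - max 0 (min 1 (K + 1 - ‖y.1‖))) := by
          simp only [hχ]; ring
        rw [h4, norm_mul, Real.norm_eq_abs (1 - _)]
        have h5 : max 0 (min 1 (K + 1 - ‖y.1‖)) ≤ 1 := max_le zero_le_one (min_le_left _ _)
        have h6 : 0 ≤ max 0 (min 1 (K + 1 - ‖y.1‖)) := le_max_left _ _
        calc _ ≤ D * 1 := by
              gcongr
              · exact hD _
              · rw [abs_le]; constructor <;> linarith
          _ = D := mul_one D
    · rw [integral_indicator (measurableSet_tail r K), setIntegral_const, smul_eq_mul, mul_comm]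
  rw [Metric.tendsto_atTop']
  intro ε hε
  obtain ⟨δ, hδ, hδε⟩ : ∃ δ : ℝ, 0 < δ ∧ D * δ < ε / 3 := by
    refine ⟨ε / 3 / (D + 1), by positivity, ?_⟩
    rw [mul_div_assoc', div_lt_iff₀ (by positivity)]
    nlinarith
  obtain ⟨K₁, -, hK₁⟩ := htight r δ hδ
  obtain ⟨K₂, -, hK₂⟩ := exists_tail_le μ hδ
  have hanti : ∀ (m : Measure (F × F)) [IsFiniteMeasure m] (K K' : ℝ), K ≤ K' →
      m.real {y | ‖y.2‖ ≤ r ∧ K' < ‖y.1‖} ≤ m.real {y | ‖y.2‖ ≤ r ∧ K < ‖y.1‖} :=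
    fun m _ K K' h => measureReal_mono fun y hy => ⟨hy.1, h.trans_lt hy.2⟩
  set K := max K₁ K₂
  have hμK : D * μ.real {y | ‖y.2‖ ≤ r ∧ K < ‖y.1‖} ≤ D * δ := by
    refine mul_le_mul_of_nonneg_left ((hanti μ _ _ (le_max_right K₁ K₂)).trans
      ((measureReal_mono fun y hy => ?_).trans hK₂)) hD0
    exact hy.2.trans_le (norm_fst_le y)
  have hv := (Metric.tendsto_nhds.1 (hvague _ (hχc K) (hχs K))) (ε / 3) (by positivity)
  obtain ⟨N, hN⟩ := eventually_atTop.1 (hv.and hK₁)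
  refine ⟨N, fun n hn => ?_⟩
  obtain ⟨h1, h2⟩ := hN n hn.le
  have h3 : D * (ν n).real {y | ‖y.2‖ ≤ r ∧ K < ‖y.1‖} ≤ D * δ :=
    mul_le_mul_of_nonneg_left ((hanti (ν n) _ _ (le_max_left K₁ K₂)).trans h2) hD0
  have h4 := hdiff K (ν n)
  have h5 := hdiff K μ
  rw [Real.dist_eq] at h1 ⊢
  rw [abs_le] at h4 h5
  rw [abs_lt] at h1 ⊢
  constructor <;> linarith [h1.1, h1.2, h4.1, h4.2, h5.1, h5.2]

/-- The forces generated by measures of mass at most one are equi-Lipschitz. -/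
theorem norm_integral_conv_sub_le {d : ℕ} {k : Euc d → Euc d} (hk : ContDiff ℝ 1 k)
    (hkc : HasCompactSupport k) :
    ∃ L : ℝ, 0 ≤ L ∧ ∀ (m : Measure (Euc d × Euc d)) [IsFiniteMeasure m], m univ ≤ 1 → ∀ q q',
      ‖(∫ y, k (q - y.2) ∂m) - ∫ y, k (q' - y.2) ∂m‖ ≤ L * ‖q - q'‖ := by
  obtain ⟨L, hL⟩ := hk.lipschitzWith_of_hasCompactSupport hkc one_ne_zero
  obtain ⟨D, hD⟩ := hkc.exists_bound_of_continuous hk.continuous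
  refine ⟨L, L.2, fun m _ hm q q' => ?_⟩
  have hi : ∀ q, Integrable (fun y => k (q - y.2)) m := fun q => by
    have hkc := hk.continuous
    exact Integrable.of_bound (C := D)
      (by fun_prop : Continuous fun y : Euc d × Euc d => k (q - y.2)).aestronglyMeasurable
      (Eventually.of_forall fun x => hD _)
  rw [← integral_sub (hi q) (hi q')]
  have h1 : m.real univ ≤ 1 := ENNReal.toReal_le_of_le_ofReal zero_le_one (by simpa using hm)
  have h2 : 0 ≤ L * ‖q - q'‖ := by positivity
  refine (norm_integral_le_of_norm_le_const (μ := m) (C := L * ‖q - q'‖)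
    (Eventually.of_forall fun y => ?_)).trans (by nlinarith [measureReal_nonneg (μ := m) (s := univ)])
  simpa [dist_eq_norm] using hL.dist_le_mul (q - y.2) (q' - y.2)

theorem tendsto_integral_conv {d : ℕ} {ν : ℕ → Measure (Euc d × Euc d)}
    [∀ n, IsProbabilityMeasure (ν n)] {μ : Measure (Euc d × Euc d)} [IsFiniteMeasure μ]
    (hvague : ∀ ψ : Euc d × Euc d → ℝ, Continuous ψ → HasCompactSupport ψ →
      Tendsto (fun n => ∫ x, ψ x ∂(ν n)) atTop (𝓝 (∫ x, ψ x ∂μ)))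
    (htight : ∀ r ε : ℝ, 0 < ε → ∃ K : ℝ, 0 < K ∧ ∀ᶠ n in atTop,
      (ν n).real {y | ‖y.2‖ ≤ r ∧ K < ‖y.1‖} ≤ ε)
    {k : Euc d → Euc d} (hk : Continuous k) (hkc : HasCompactSupport k) (q : Euc d) :
    Tendsto (fun n => ∫ y, k (q - y.2) ∂(ν n)) atTop (𝓝 (∫ y, k (q - y.2) ∂μ)) := by
  obtain ⟨D, hD⟩ := hkc.exists_bound_of_continuous hk
  have hi : ∀ (m : Measure (Euc d × Euc d)) [IsFiniteMeasure m],
      Integrable (fun y => k (q - y.2)) m := fun m _ =>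
    Integrable.of_bound (C := D)
      (by fun_prop : Continuous fun y : Euc d × Euc d => k (q - y.2)).aestronglyMeasurable
      (Eventually.of_forall fun x => hD _)
  rw [← (stdOrthonormalBasis ℝ (Euc d)).sum_repr' (∫ y, k (q - y.2) ∂μ)]
  refine Tendsto.congr
    (fun n => (stdOrthonormalBasis ℝ (Euc d)).sum_repr' (∫ y, k (q - y.2) ∂(ν n))) ?_
  refine tendsto_finsetSum _ fun i _ => Tendsto.smul_const ?_ _
  simp_rw [← integral_inner (hi _)]
  refine tendsto_integral_comp_snd (f := fun z => ⟪stdOrthonormalBasis ℝ (Euc d) i, k (q - z)⟫)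
    hvague htight (by fun_prop) ?_
  exact (hkc.comp_homeomorph (Homeomorph.subLeft q)).comp_left
    (g := fun v => ⟪stdOrthonormalBasis ℝ (Euc d) i, v⟫) (inner_zero_right _)

/-- Pointwise convergence of the forces is uniform on compact sets, by equi-Lipschitz continuity. -/
theorem eventually_norm_integral_conv_sub_le {d : ℕ} {ν : ℕ → Measure (Euc d × Euc d)}
    [∀ n, IsProbabilityMeasure (ν n)] {μ : Measure (Euc d × Euc d)} [IsFiniteMeasure μ]
    (hμ1 : μ univ ≤ 1)
    {k : Euc d → Euc d} (hk : ContDiff ℝ 1 k) (hkc : HasCompactSupport k)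
    (hlim : ∀ q, Tendsto (fun n => ∫ y, k (q - y.2) ∂(ν n)) atTop (𝓝 (∫ y, k (q - y.2) ∂μ)))
    {S : Set (Euc d)} (hS : IsCompact S) {ε : ℝ} (hε : 0 < ε) :
    ∀ᶠ n in atTop, ∀ q ∈ S, ‖(∫ y, k (q - y.2) ∂(ν n)) - ∫ y, k (q - y.2) ∂μ‖ ≤ ε := by
  obtain ⟨L, hL0, hL⟩ := norm_integral_conv_sub_le hk hkc
  obtain ⟨A, -, hAf, hA⟩ := hS.finite_cover_balls (e := ε / (3 * (L + 1))) (by positivity)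
  have h1 : ∀ᶠ n in atTop, ∀ c ∈ A, ‖(∫ y, k (c - y.2) ∂(ν n)) - ∫ y, k (c - y.2) ∂μ‖ < ε / 3 := by
    rw [hAf.eventually_all]
    intro c _
    have := Metric.tendsto_nhds.1 (hlim c) (ε / 3) (by positivity)
    simpa [dist_eq_norm] using this
  filter_upwards [h1] with n hn q hq
  obtain ⟨c, hc, hqc⟩ := mem_iUnion₂.1 (hA hq)
  rw [Metric.mem_ball, dist_eq_norm, lt_div_iff₀ (by positivity)] at hqc
  have h2 := hL (ν n) (by simp) q c
  have h3 := hL μ hμ1 c q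
  rw [norm_sub_rev c q] at h3
  have h4 : L * ‖q - c‖ ≤ ε / 3 := by nlinarith [norm_nonneg (q - c)]
  have h5 := hn c hc
  have h6 : (∫ y, k (q - y.2) ∂(ν n)) - ∫ y, k (q - y.2) ∂μ =
      ((∫ y, k (q - y.2) ∂(ν n)) - ∫ y, k (c - y.2) ∂(ν n)) +
      ((∫ y, k (c - y.2) ∂(ν n)) - ∫ y, k (c - y.2) ∂μ) +
      ((∫ y, k (c - y.2) ∂μ) - ∫ y, k (q - y.2) ∂μ) := by abel
  rw [h6]
  refine norm_add₃_le.trans ?_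
  linarith

/-- The left-hand side of the weak formulation converges at each fixed time. -/
theorem tendsto_weak_form {d : ℕ} {W Φ : Euc d → ℝ} (hW : ContDiff ℝ 2 W)
    (hWc : HasCompactSupport W) (hΦ : ContDiff ℝ 2 Φ) {ν : ℕ → Measure (Euc d × Euc d)}
    [∀ n, IsProbabilityMeasure (ν n)] {μ : Measure (Euc d × Euc d)} [IsFiniteMeasure μ]
    (hμ1 : μ univ ≤ 1)
    (hvague : ∀ ψ : Euc d × Euc d → ℝ, Continuous ψ → HasCompactSupport ψ →
      Tendsto (fun n => ∫ x, ψ x ∂(ν n)) atTop (𝓝 (∫ x, ψ x ∂μ)))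
    (htight : ∀ r ε : ℝ, 0 < ε → ∃ K : ℝ, 0 < K ∧ ∀ᶠ n in atTop,
      (ν n).real {y | ‖y.2‖ ≤ r ∧ K < ‖y.1‖} ≤ ε)
    {φ : (Euc d × Euc d) × ℝ → ℝ} (hφ : ContDiff ℝ (⊤ : ℕ∞) φ) (hφc : HasCompactSupport φ)
    (t : ℝ) :
    Tendsto (fun n => ∫ x, fderiv ℝ φ (x, t) ((-forceF Φ W (ν n) x.2, x.1), 1) ∂(ν n)) atTop
      (𝓝 (∫ x, fderiv ℝ φ (x, t) ((-forceF Φ W μ x.2, x.1), 1) ∂μ)) := by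
  have hk := contDiff_gradient hW
  have hkc := hasCompactSupport_gradient hWc
  have hg := contDiff_gradient hΦ
  have hgc := hg.continuous
  obtain ⟨L, hL0, hL⟩ := norm_integral_conv_sub_le hk hkc
  obtain ⟨K, hK⟩ := (hφc.fderiv ℝ).exists_bound_of_continuous (hφ.continuous_fderiv (by simp))
  have hK0 : 0 ≤ K := (norm_nonneg _).trans (hK 0)
  obtain ⟨M, hM⟩ := hφc.isCompact.isBounded.subset_closedBall 0
  have hfc : ∀ (m : Measure (Euc d × Euc d)) [IsFiniteMeasure m], m univ ≤ 1 →
      Continuous (forceF Φ W m) := by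
    intro m _ hm
    refine hgc.add (LipschitzWith.of_dist_le_mul (K := L.toNNReal) fun x y => ?_).continuous
    rw [dist_eq_norm, dist_eq_norm, Real.coe_toNNReal _ hL0]
    exact hL m hm x y
  have hzero : ∀ x : Euc d × Euc d, x ∉ Metric.closedBall 0 M → fderiv ℝ φ (x, t) = 0 := by
    intro x hx
    refine image_eq_zero_of_notMem_tsupport fun h => hx ?_
    have := hM (tsupport_fderiv_subset ℝ h)
    rw [mem_closedBall_zero_iff] at this ⊢
    exact (norm_fst_le (x, t)).trans this
  have hcont : ∀ (m : Measure (Euc d × Euc d)) [IsFiniteMeasure m], m univ ≤ 1 →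
      Continuous fun x => fderiv ℝ φ (x, t) ((-forceF Φ W m x.2, x.1), 1) := by
    intro m _ hm
    have h1 := hfc m hm
    exact ((hφ.continuous_fderiv (by simp)).comp (by fun_prop : Continuous fun x => (x, t))).clm_apply
      (by fun_prop)
  have hcs : ∀ m : Measure (Euc d × Euc d),
      HasCompactSupport fun x => fderiv ℝ φ (x, t) ((-forceF Φ W m x.2, x.1), 1) := by
    intro m
    refine HasCompactSupport.intro (isCompact_closedBall 0 M) fun x hx => ?_
    rw [hzero x hx, zero_apply]
  -- `∫ h dν n` with the limiting integrand `h` converges; it remains to compare the integrands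
  have hlim := hvague _ (hcont μ hμ1) (hcs μ)
  refine hlim.congr_dist ?_
  rw [Metric.tendsto_nhds]
  intro ε hε
  have hev := eventually_norm_integral_conv_sub_le hμ1 hk hkc
    (tendsto_integral_conv hvague htight hk.continuous hkc) (isCompact_closedBall (0:Euc d) M)
    (ε := ε / (2 * (K + 1))) (by positivity)
  filter_upwards [hev] with n hn
  rw [dist_zero_right, Real.norm_eq_abs, abs_of_nonneg dist_nonneg, dist_eq_norm,
    ← integral_sub ((hcont μ hμ1).integrable_of_hasCompactSupport (hcs μ))
      ((hcont (ν n) (by simp)).integrable_of_hasCompactSupport (hcs (ν n)))]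
  refine (norm_integral_le_of_prob (ν n) (C := ε / 2) fun x => ?_).trans_lt (by linarith)
  by_cases hx : x ∈ Metric.closedBall 0 M
  · rw [← map_sub]
    have h1 : (((-forceF Φ W μ x.2, x.1), 1) : (Euc d × Euc d) × ℝ) -
        ((-forceF Φ W (ν n) x.2, x.1), 1) =
        (((∫ y, gradient W (x.2 - y.2) ∂(ν n)) - ∫ y, gradient W (x.2 - y.2) ∂μ, 0), 0) := by
      simp only [forceF, Prod.mk_sub_mk, sub_self]
      congr 2
      abel
    rw [h1]
    refine (ContinuousLinearMap.le_opNorm _ _).trans ?_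
    have h2 := hn x.2 (by
      rw [mem_closedBall_zero_iff] at hx ⊢
      exact (norm_snd_le x).trans hx)
    rw [Prod.norm_mk, Prod.norm_mk, norm_zero, norm_zero, max_eq_left (norm_nonneg _),
      max_eq_left (norm_nonneg _)]
    refine (mul_le_mul (hK _) h2 (norm_nonneg _) hK0).trans ?_
    rw [mul_div_assoc', div_le_div_iff₀ (by positivity) (by positivity)]
    nlinarith
  · rw [hzero x hx, zero_apply, zero_apply, sub_zero, norm_zero]
    positivity

/-- The laws of the particles of the truncated flow solve the weak form of the untruncated
equation, for test functions supported where the truncation is inactive. -/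
theorem truncated_flow_weak_form {d : ℕ} {W Φ : Euc d → ℝ} (hW : ContDiff ℝ 2 W)
    (hΦ : ContDiff ℝ 2 Φ) (μ₀ : Measure (Euc d × Euc d)) [IsProbabilityMeasure μ₀]
    {B' : ℝ} (hB' : ∀ q, ‖gradient W q‖ ≤ B') {T : ℝ} (hT : 0 < T)
    {φ : (Euc d × Euc d) × ℝ → ℝ} (hφ : ContDiff ℝ (⊤ : ℕ∞) φ) (hφc : HasCompactSupport φ)
    (hφT : tsupport φ ⊆ univ ×ˢ Ioo (0:ℝ) T) :
    ∃ R₀ C : ℝ, ∀ (R : ℝ) (X : ℝ → Euc d × Euc d → Euc d × Euc d), 0 < R → R₀ ≤ R →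
      IsMeanFieldFlow μ₀ (fun q => gradient Φ (radialProj R q)) (gradient W) X →
      AEStronglyMeasurable (fun t => ∫ x, fderiv ℝ φ (x, t)
        ((-forceF Φ W (μ₀.map (X t)) x.2, x.1), 1) ∂(μ₀.map (X t)))
        (volume.restrict (Ioo (0:ℝ) T)) ∧
      (∀ t, ‖∫ x, fderiv ℝ φ (x, t)
        ((-forceF Φ W (μ₀.map (X t)) x.2, x.1), 1) ∂(μ₀.map (X t))‖ ≤ C) ∧
      ∫ t in Ioo (0:ℝ) T, ∫ x, fderiv ℝ φ (x, t)
        ((-forceF Φ W (μ₀.map (X t)) x.2, x.1), 1) ∂(μ₀.map (X t)) = 0 := by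
  obtain ⟨K, hK⟩ := (hφc.fderiv ℝ).exists_bound_of_continuous (hφ.continuous_fderiv (by simp))
  have hK0 : 0 ≤ K := (norm_nonneg _).trans (hK 0)
  obtain ⟨R₀, hR₀⟩ := hφc.isCompact.isBounded.subset_closedBall 0
  obtain ⟨C, hC0, hC⟩ := exists_velocity_bound hΦ μ₀ hB' (hφc.isCompact.image continuous_fst)
  refine ⟨R₀, K * max C 1, fun R X hR hRR hX => ?_⟩
  have hk : Continuous (gradient W) := (contDiff_gradient hW).continuous
  have hg : Continuous (gradient Φ) := (contDiff_gradient hΦ).continuous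
  -- the derivative of the test function along a trajectory
  have hd : ∀ x t, HasDerivAt (fun τ => φ (X τ x, τ))
      (fderiv ℝ φ (X t x, t) (deriv (fun s => X s x) t, 1)) t := fun x t =>
    (hφ.differentiable (by simp) _).hasFDerivAt.comp_hasDerivAt t
      ((hX.deriv t x).differentiableAt.hasDerivAt.prodMk (hasDerivAt_id t))
  have hzero : ∀ x t, (X t x, t) ∉ tsupport φ → fderiv ℝ φ (X t x, t) = 0 := fun x t h =>
    image_eq_zero_of_notMem_tsupport fun h' => h (tsupport_fderiv_subset ℝ h')
  have hbd : ∀ x t, ‖deriv (fun τ => φ (X τ x, τ)) t‖ ≤ K * max C 1 := by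
    intro x t
    rw [(hd x t).deriv]
    by_cases h : (X t x, t) ∈ tsupport φ
    · refine (ContinuousLinearMap.le_opNorm _ _).trans
        (mul_le_mul (hK _) ?_ (norm_nonneg _) hK0)
      rw [Prod.norm_mk, norm_one]
      exact max_le_max (hC R X hR hX t x ⟨_, h, rfl⟩) le_rfl
    · rw [hzero x t h, zero_apply, norm_zero]
      positivity
  have hcont : Continuous (Function.uncurry fun (x : Euc d × Euc d) τ => φ (X τ x, τ)) :=
    hφ.continuous.comp ((hX.cont.comp continuous_swap).prodMk continuous_snd)
  have hmeas := measurable_deriv_with_param hcont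
  have hforce : ∀ t q, forceF Φ W (μ₀.map (X t)) q =
      gradient Φ q + ∫ y, gradient W (q - (X t y).2) ∂μ₀ := by
    intro t q
    rw [forceF, integral_map (hX.continuous t).aemeasurable (by
      exact (by fun_prop : Continuous fun y : Euc d × Euc d =>
        gradient W (q - y.2)).aestronglyMeasurable)]
  have hpt : ∀ t x, fderiv ℝ φ (X t x, t)
      ((-forceF Φ W (μ₀.map (X t)) (X t x).2, (X t x).1), 1) =
      deriv (fun τ => φ (X τ x, τ)) t := by
    intro t x
    rw [(hd x t).deriv]
    by_cases h : (X t x, t) ∈ tsupport φ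
    · have h1 : ‖(X t x).2‖ ≤ R := by
        have := hR₀ h
        rw [mem_closedBall_zero_iff] at this
        exact (norm_snd_le _).trans ((norm_fst_le (X t x, t)).trans (this.trans hRR))
      rw [(hX.deriv t x).deriv, radialProj_of_le hR h1, hforce, neg_add']
    · rw [hzero x t h, zero_apply, zero_apply]
  have hfc : ∀ t, Continuous (forceF Φ W (μ₀.map (X t))) := by
    intro t
    have h1 : Continuous fun q => ∫ y, gradient W (q - (X t y).2) ∂μ₀ := by
      have hXt := hX.continuous t
      refine continuous_of_dominated (bound := fun _ => B') (fun q => ?_)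
        (fun q => Eventually.of_forall fun y => hB' _) (integrable_const _)
        (Eventually.of_forall fun y => by fun_prop)
      exact (by fun_prop : Continuous fun y => gradient W (q - (X t y).2)).aestronglyMeasurable
    rw [funext (hforce t)]
    exact hg.add h1
  have hgk : ∀ t, ∫ x, fderiv ℝ φ (x, t)
      ((-forceF Φ W (μ₀.map (X t)) x.2, x.1), 1) ∂(μ₀.map (X t)) =
      ∫ x, deriv (fun τ => φ (X τ x, τ)) t ∂μ₀ := by
    intro t
    have h1 := hfc t
    have h2 : Continuous fun x => fderiv ℝ φ (x, t)
        ((-forceF Φ W (μ₀.map (X t)) x.2, x.1), 1) :=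
      ((hφ.continuous_fderiv (by simp)).comp
        (by fun_prop : Continuous fun x => (x, t))).clm_apply (by fun_prop)
    rw [integral_map (hX.continuous t).aemeasurable h2.aestronglyMeasurable]
    exact integral_congr_ae (Eventually.of_forall fun x => hpt t x)
  simp_rw [hgk]
  refine ⟨?_, fun t => norm_integral_le_of_prob μ₀ fun x => hbd x t, ?_⟩
  · exact (StronglyMeasurable.integral_prod_right (ν := μ₀)
      (f := fun t x => deriv (fun τ => φ (X τ x, τ)) t)
      (hmeas.comp measurable_swap).stronglyMeasurable).aestronglyMeasurable
  rw [integral_integral_swap]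
  · have h0 : ∀ x, ∫ t in Ioo (0:ℝ) T, deriv (fun τ => φ (X τ x, τ)) t = 0 := by
      intro x
      rw [← integral_Ioc_eq_integral_Ioo, ← intervalIntegral.integral_of_le hT.le,
        intervalIntegral.integral_deriv_eq_sub
          (fun t _ => (hd x t).differentiableAt) ?_]
      · have h1 : ∀ t, t ∉ Ioo 0 T → φ (X t x, t) = 0 := fun t ht =>
          image_eq_zero_of_notMem_tsupport fun h => ht (hφT h).2
        rw [h1 T (by simp), h1 0 (by simp), sub_zero]
      · rw [intervalIntegrable_iff, uIoc_of_le hT.le]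
        exact Integrable.of_bound (C := K * max C 1) (aestronglyMeasurable_deriv _ _)
          (Eventually.of_forall fun t => hbd x t)
    simp_rw [h0, integral_zero]
  · exact Integrable.of_bound (C := K * max C 1)
      (hmeas.comp measurable_swap).aestronglyMeasurable
      (Eventually.of_forall fun z => hbd z.2 z.1)

/-! ### Existence of a solution -/

/-- under the dynamical hypothesis (a bounding radial potential `u` with an
unbounded sequence of rings of no return), there exists a distributionally continuous
family of measures of mass at most 1 starting at `μ₀` solving the Hamiltonian ODE
`∂_t μ_t + ∇·(J∇_W ℋ(μ_t) μ_t) = 0` in the sense of distributions. -/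
theorem stmt19 {d : ℕ} (hd : 0 < d) {T α₀ : ℝ} (hT : 0 < T) (hα₀ : 0 < α₀)
    (W : Euc d → ℝ) (hW : ContDiff ℝ 2 W) (hWc : HasCompactSupport W)
    (hWeven : ∀ q, W (-q) = W q)
    (Φ : Euc d → ℝ) (hΦ : ContDiff ℝ 2 Φ)
    (B₁ b₂ : ℝ) (hΦb : ∀ q, |Φ q| ≤ B₁ * ‖q‖ ^ b₂)
    (μ₀ : Measure (Euc d × Euc d)) [IsProbabilityMeasure μ₀]
    (hexp : ∫⁻ x, ENNReal.ofReal (Real.exp (α₀ * phNorm x)) ∂μ₀ < ⊤)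
    (B : ℝ) (hB : ∀ q : Euc d, ‖gradient W q‖ < B)
    (u : ℝ → ℝ) (hu : ContDiff ℝ 2 u)
    (hu' : ∀ r : ℝ, 0 < r → ∀ x : Euc d, ‖x‖ = r →
      B + ⟪gradient Φ x, ‖x‖⁻¹ • x⟫ ≤ deriv u r)
    (qstar : ℕ → Euc d) (hmono : StrictMono fun L => ‖qstar L‖)
    (hinf : Tendsto (fun L => ‖qstar L‖) atTop atTop)
    (hring : ∀ L : ℕ, ∀ s : ℝ, ‖qstar L‖ < s → u s < u ‖qstar L‖) :
    ∃ μ : ℝ → Measure (Euc d × Euc d), μ 0 = μ₀ ∧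
      (∀ t ∈ Icc (0:ℝ) T, μ t univ ≤ 1) ∧
      (∀ φ : Euc d × Euc d → ℝ, ContDiff ℝ (⊤ : ℕ∞) φ → HasCompactSupport φ →
        ContinuousOn (fun t => ∫ x, φ x ∂(μ t)) (Icc (0:ℝ) T)) ∧
      (∀ φ : (Euc d × Euc d) × ℝ → ℝ, ContDiff ℝ (⊤ : ℕ∞) φ → HasCompactSupport φ →
        tsupport φ ⊆ univ ×ˢ Ioo (0:ℝ) T →
        ∫ t in Ioo (0:ℝ) T,
          ∫ x, fderiv ℝ φ (x, t) ((-forceF Φ W (μ t) x.2, x.1), 1) ∂(μ t) = 0) := by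
  obtain ⟨B', hBB, hB'⟩ := exists_bound_lt (contDiff_gradient hW).continuous
    (hasCompactSupport_gradient hWc) hB
  -- the innermost ring is dropped so that all radii are positive
  set rad : ℕ → ℝ := fun n => ‖qstar (n + 1)‖ with hrad
  have hpos : ∀ n, 0 < rad n := fun n => (norm_nonneg _).trans_lt (hmono n.lt_succ_self)
  have hrmono : StrictMono rad := fun m n h => hmono (Nat.succ_lt_succ h)
  have hrinf : Tendsto rad atTop atTop := hinf.comp (tendsto_add_atTop_nat 1)
  have hrring : ∀ n s, rad n < s → u s < u (rad n) := fun n s => hring (n + 1) s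
  choose X hX using fun n => exists_truncated_flow hW hWc hΦ μ₀
    (integrable_norm_of_exp hα₀ hexp) (hpos n)
  set ν : ℕ → ℝ → Measure (Euc d × Euc d) := fun n t => μ₀.map (X n t) with hν
  have hprob : ∀ n t, IsProbabilityMeasure (ν n t) := fun n t =>
    Measure.isProbabilityMeasure_map ((hX n).continuous t).aemeasurable
  have hLip : ∀ ψ : Euc d × Euc d → ℝ, ContDiff ℝ (⊤ : ℕ∞) ψ → HasCompactSupport ψ →
      ∃ C : ℝ, ∀ n s t, |∫ x, ψ x ∂(ν n t) - ∫ x, ψ x ∂(ν n s)| ≤ C * |t - s| := by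
    intro ψ hψ hψc
    obtain ⟨C, hC⟩ := exists_lipschitz_bound hΦ μ₀ hB' hψ hψc
    exact ⟨C, fun n s t => hC (rad n) (X n) (hpos n) (hX n) s t⟩
  obtain ⟨σ, hσ, μ, hμ1, hvague⟩ := exists_subseq_vague ν hprob hLip
  have hμfin : ∀ t, IsFiniteMeasure (μ t) := fun t => ⟨(hμ1 t).trans_lt ENNReal.one_lt_top⟩
  have htight : ∀ t ∈ Icc (0:ℝ) T, ∀ r ε : ℝ, 0 < ε → ∃ K : ℝ, 0 < K ∧ ∀ᶠ n in atTop,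
      (ν (σ n) t).real {y | ‖y.2‖ ≤ r ∧ K < ‖y.1‖} ≤ ε := by
    intro t ht r ε hε
    obtain ⟨K, hK0, hK⟩ := exists_momentum_tail_le hΦ μ₀ hBB hB' hu hu' hrmono hpos hrinf hrring
      hX T r hε
    exact ⟨K, hK0, (hσ.tendsto_atTop.eventually hK).mono fun n hn => hn t ht⟩
  have hν0 : ∀ n, ν n 0 = μ₀ := fun n => by
    have : X n 0 = id := funext fun x => (hX n).init x
    rw [hν]
    simp only [this, Measure.map_id]
  -- the limit at time `0` tests like `μ₀`, so that `μ 0` may be replaced by `μ₀`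
  have hμ' : ∀ ψ : Euc d × Euc d → ℝ, Continuous ψ → HasCompactSupport ψ → ∀ t,
      Tendsto (fun n => ∫ x, ψ x ∂(ν (σ n) t)) atTop
        (𝓝 (∫ x, ψ x ∂(if t = 0 then μ₀ else μ t))) := by
    intro ψ hψ hψc t
    by_cases h : t = 0
    · simp only [h, if_true, hν0]
      exact tendsto_const_nhds
    · simpa only [h, if_false] using hvague ψ hψ hψc t
  refine ⟨fun t => if t = 0 then μ₀ else μ t, by simp, fun t _ => ?_, fun φ hφ hφc => ?_,
    fun φ hφ hφc hφT => ?_⟩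
  · by_cases h : t = 0
    · simp [h]
    · simpa [h] using hμ1 t
  · obtain ⟨C, hC⟩ := hLip φ hφ hφc
    refine Continuous.continuousOn (LipschitzWith.of_dist_le_mul (K := C.toNNReal)
      fun t s => ?_).continuous
    rw [Real.dist_eq, Real.dist_eq]
    have hlim := ((hμ' φ hφ.continuous hφc t).sub (hμ' φ hφ.continuous hφc s)).abs
    refine (le_of_tendsto hlim (Eventually.of_forall fun n => hC (σ n) s t)).trans ?_
    exact mul_le_mul_of_nonneg_right (Real.le_coe_toNNReal C) (abs_nonneg _)
  · obtain ⟨R₀, C, hRC⟩ := truncated_flow_weak_form hW hΦ μ₀ hB' hT hφ hφc hφT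
    have hev : ∀ᶠ n in atTop, R₀ ≤ rad (σ n) :=
      hσ.tendsto_atTop.eventually (hrinf.eventually_ge_atTop R₀)
    have hlim := tendsto_integral_filter_of_dominated_convergence
      (μ := volume.restrict (Ioo (0:ℝ) T))
      (F := fun n t => ∫ x, fderiv ℝ φ (x, t) ((-forceF Φ W (ν (σ n) t) x.2, x.1), 1) ∂(ν (σ n) t))
      (f := fun t => ∫ x, fderiv ℝ φ (x, t) ((-forceF Φ W (μ t) x.2, x.1), 1) ∂(μ t))
      (l := atTop) (fun _ => C)
      (hev.mono fun n hn => (hRC _ _ (hpos _) hn (hX (σ n))).1)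
      (hev.mono fun n hn => Eventually.of_forall (hRC _ _ (hpos _) hn (hX (σ n))).2.1)
      (integrable_const C)
      ((ae_restrict_mem measurableSet_Ioo).mono fun t ht => by
        have := fun n => hprob (σ n) t
        exact tendsto_weak_form hW hWc hΦ (hμ1 t) (fun ψ hψ hψc => hvague ψ hψ hψc t)
          (htight t (Ioo_subset_Icc_self ht)) hφ hφc t)
    have h0 := tendsto_nhds_unique (hlim.congr' (hev.mono fun n hn =>
      (hRC _ _ (hpos _) hn (hX (σ n))).2.2)) tendsto_const_nhds
    refine Eq.trans ?_ h0
    refine setIntegral_congr_fun measurableSet_Ioo fun t ht => ?_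
    simp only [ht.1.ne', if_false]
end
end
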